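/- arXiv:1106.6214 — 4 statements merged into one kernel-verified Lean document; each statement's English description precedes it below -/
import Mathlib

section
/- Let d ≥ 0 and let α, β be angles with 0 ≤ α ≤ π and α ≤ β ≤ 2π − α. If √((d + sin β + sin α)² + (cos β + cos α)²) ≥ 2, then there exists a bounded-curvature path from configuration (0,0,α) to (d,0,β) of length at most d + 2π. -/
open Real

/-- A bounded-curvature path of length `T ≥ 0` from configuration `(x₀, y₀, α)`
to configuration `(x₁, y₁, β)`: a map `γ : ℝ → ℝ²` (Euclidean plane) that is
continuously differentiable on `[0, T]` with unit-speed derivative `γ'`, whose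
derivative is `1`-Lipschitz on `[0, T]` (curvature bound `≤ 1`), starting at
`(x₀, y₀)` with direction `(cos α, sin α)` and ending at `(x₁, y₁)` with
direction `(cos β, sin β)`. -/
def IsBCPath (T x₀ y₀ α x₁ y₁ β : ℝ) (γ : ℝ → EuclideanSpace ℝ (Fin 2)) : Prop :=
  0 ≤ T ∧
  ∃ γ' : ℝ → EuclideanSpace ℝ (Fin 2),
    (∀ t ∈ Set.Icc (0:ℝ) T, HasDerivWithinAt γ (γ' t) (Set.Icc 0 T) t) ∧
    ContinuousOn γ' (Set.Icc 0 T) ∧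
    (∀ t ∈ Set.Icc (0:ℝ) T, ‖γ' t‖ = 1) ∧
    LipschitzOnWith 1 γ' (Set.Icc 0 T) ∧
    γ 0 = ![x₀, y₀] ∧ γ' 0 = ![Real.cos α, Real.sin α] ∧
    γ T = ![x₁, y₁] ∧ γ' T = ![Real.cos β, Real.sin β]

/-!
A right–straight–right path has total turning `2π - (β - α)` as long as its straight part points
in a direction of `[0, α]`. Its straight part joins the centers of the two right disks, so by the
triangle inequality its length is at most `d` plus the chord `|e^{iβ} - e^{iα}| ≤ β - α`, and the
path has length at most `d + 2π`. The direction lies in `[0, α]` exactly when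
`1 - cos (β - α) ≤ d * sin α` (up to degenerate cases).

In the opposite case the left–straight–right path works. Its straight part lies on the common
tangent separating the left starting disk from the right final disk; this tangent has a direction
`θ` with `α ≤ θ ≤ α + π`, because at `θ = α` the vector between the centers points forward and
reaches less than `2` to the right. If `β ≤ θ`, the straight part is no longer than `d` and the
turns add up to at most `2π`. If `θ < β`, the turns add up to `2φ + 2π` with `φ = θ - (α + β) / 2`,
and the tangency condition `d * sin θ = 2 - 2 * cos φ * cos ((β - α) / 2)` bounds the length through
`φ ≤ tan φ` and `sin θ * tan φ ≤ 1 - cos θ`.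
-/

open Set
open scoped NNReal

section Gluing

variable {a b c : ℝ}

lemma hasDerivWithinAt_Icc_glue {E : Type*} [NormedAddCommGroup E] [NormedSpace ℝ E]
    {f f' : ℝ → E} (hab : a ≤ b) (hbc : b ≤ c)
    (h₁ : ∀ t ∈ Icc a b, HasDerivWithinAt f (f' t) (Icc a b) t)
    (h₂ : ∀ t ∈ Icc b c, HasDerivWithinAt f (f' t) (Icc b c) t) (t : ℝ) :
    HasDerivWithinAt f (f' t) (Icc a c) t := by
  have extend {u v : ℝ} (h : ∀ t ∈ Icc u v, HasDerivWithinAt f (f' t) (Icc u v) t) :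
      HasDerivWithinAt f (f' t) (Icc u v) t := by
    by_cases ht : t ∈ Icc u v
    · exact h t ht
    · exact HasFDerivWithinAt.of_notMem_closure (by rwa [isClosed_Icc.closure_eq])
  rw [← Icc_union_Icc_eq_Icc hab hbc]
  exact (extend h₁).union (extend h₂)

lemma lipschitzOnWith_Icc_glue {X : Type*} [PseudoMetricSpace X] {K : ℝ≥0} {f : ℝ → X}
    (h₁ : LipschitzOnWith K f (Icc a b)) (h₂ : LipschitzOnWith K f (Icc b c)) :
    LipschitzOnWith K f (Icc a c) := by
  have dist_le_of_le : ∀ x ∈ Icc a c, ∀ y ∈ Icc a c, x ≤ y → dist (f x) (f y) ≤ K * dist x y := by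
    intro x hx y hy hxy
    rcases le_total y b with hyb | hby
    · exact h₁.dist_le_mul x ⟨hx.1, hxy.trans hyb⟩ y ⟨hy.1, hyb⟩
    rcases le_total b x with hbx | hxb
    · exact h₂.dist_le_mul x ⟨hbx, hx.2⟩ y ⟨hby, hy.2⟩
    calc dist (f x) (f y) ≤ dist (f x) (f b) + dist (f b) (f y) := dist_triangle _ _ _
      _ ≤ K * dist x b + K * dist b y :=
        add_le_add (h₁.dist_le_mul x ⟨hx.1, hxb⟩ b ⟨hx.1.trans hxb, le_rfl⟩)
          (h₂.dist_le_mul b ⟨le_rfl, hby.trans hy.2⟩ y ⟨hby, hy.2⟩)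
      _ = K * dist x y := by
        rw [← mul_add, Real.dist_eq, Real.dist_eq, Real.dist_eq, abs_of_nonpos (sub_nonpos.2 hxb),
          abs_of_nonpos (sub_nonpos.2 hby), abs_of_nonpos (sub_nonpos.2 hxy)]
        ring
  refine LipschitzOnWith.of_dist_le_mul fun x hx y hy => ?_
  rcases le_total x y with hxy | hyx
  · exact dist_le_of_le x hx y hy hxy
  · rw [dist_comm, dist_comm x]
    exact dist_le_of_le y hy x hx hyx

end Gluing

/-- The concatenation of a curve `γ₁` parametrized on `[0, T]` with a curve `γ₂` parametrized
from time `0` on. -/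
noncomputable def concatAt {X : Type*} (T : ℝ) (γ₁ γ₂ : ℝ → X) (t : ℝ) : X :=
  if t ≤ T then γ₁ t else γ₂ (t - T)

section ConcatAt

variable {T₁ T₂ : ℝ}

lemma concatAt_of_le {X : Type*} {γ₁ γ₂ : ℝ → X} {t : ℝ} (ht : t ≤ T₁) :
    concatAt T₁ γ₁ γ₂ t = γ₁ t :=
  if_pos ht

lemma concatAt_of_ge {X : Type*} {γ₁ γ₂ : ℝ → X} (hγ : γ₁ T₁ = γ₂ 0) {t : ℝ} (ht : T₁ ≤ t) :
    concatAt T₁ γ₁ γ₂ t = γ₂ (t - T₁) := by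
  rcases ht.eq_or_lt with rfl | ht
  · rw [concatAt_of_le le_rfl, hγ, sub_self]
  · exact if_neg ht.not_ge

lemma concatAt_add {X : Type*} {γ₁ γ₂ : ℝ → X} (hγ : γ₁ T₁ = γ₂ 0) (hT₂ : 0 ≤ T₂) :
    concatAt T₁ γ₁ γ₂ (T₁ + T₂) = γ₂ T₂ := by
  rw [concatAt_of_ge hγ (le_add_of_nonneg_right hT₂), add_sub_cancel_left]

lemma sub_mem_Icc_zero_of_mem_Icc_add {t : ℝ} (ht : t ∈ Icc T₁ (T₁ + T₂)) :
    t - T₁ ∈ Icc 0 T₂ :=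
  ⟨sub_nonneg.2 ht.1, sub_le_iff_le_add'.2 ht.2⟩

lemma hasDerivWithinAt_concatAt {E : Type*} [NormedAddCommGroup E] [NormedSpace ℝ E]
    {γ₁ γ₂ γ₁' γ₂' : ℝ → E} (hT₁ : 0 ≤ T₁) (hT₂ : 0 ≤ T₂) (hγ : γ₁ T₁ = γ₂ 0) (hγ' : γ₁' T₁ = γ₂' 0)
    (h₁ : ∀ t ∈ Icc 0 T₁, HasDerivWithinAt γ₁ (γ₁' t) (Icc 0 T₁) t)
    (h₂ : ∀ t ∈ Icc 0 T₂, HasDerivWithinAt γ₂ (γ₂' t) (Icc 0 T₂) t) (t : ℝ) :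
    HasDerivWithinAt (concatAt T₁ γ₁ γ₂) (concatAt T₁ γ₁' γ₂' t) (Icc 0 (T₁ + T₂)) t := by
  refine hasDerivWithinAt_Icc_glue hT₁ (le_add_of_nonneg_right hT₂) ?_ ?_ t
  · intro t ht
    rw [concatAt_of_le ht.2]
    exact (h₁ t ht).congr_of_mem (fun u hu => concatAt_of_le hu.2) ht
  · intro t ht
    rw [concatAt_of_ge hγ' ht.1]
    have shifted : HasDerivWithinAt (fun u => γ₂ (u - T₁)) (γ₂' (t - T₁)) (Icc T₁ (T₁ + T₂)) t := by
      simpa only [one_smul] using! (h₂ _ (sub_mem_Icc_zero_of_mem_Icc_add ht)).scomp t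
        ((hasDerivWithinAt_id t _).sub_const T₁) fun _ => sub_mem_Icc_zero_of_mem_Icc_add
    exact shifted.congr_of_mem (fun u hu => concatAt_of_ge hγ hu.1) ht

lemma lipschitzOnWith_concatAt {X : Type*} [PseudoMetricSpace X] {K : ℝ≥0} {γ₁ γ₂ : ℝ → X}
    (hγ : γ₁ T₁ = γ₂ 0) (h₁ : LipschitzOnWith K γ₁ (Icc 0 T₁))
    (h₂ : LipschitzOnWith K γ₂ (Icc 0 T₂)) :
    LipschitzOnWith K (concatAt T₁ γ₁ γ₂) (Icc 0 (T₁ + T₂)) := by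
  refine lipschitzOnWith_Icc_glue (b := T₁) ?_ ?_
  · refine LipschitzOnWith.of_dist_le_mul fun t ht u hu => ?_
    rw [concatAt_of_le ht.2, concatAt_of_le hu.2]
    exact h₁.dist_le_mul t ht u hu
  · refine LipschitzOnWith.of_dist_le_mul fun t ht u hu => ?_
    rw [concatAt_of_ge hγ ht.1, concatAt_of_ge hγ hu.1, ← dist_sub_right t u T₁]
    exact h₂.dist_le_mul _ (sub_mem_Icc_zero_of_mem_Icc_add ht) _
      (sub_mem_Icc_zero_of_mem_Icc_add hu)

end ConcatAt

section BoundedCurvaturePaths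

variable {T T₁ T₂ x₀ y₀ α x₁ y₁ β x₂ y₂ φ : ℝ} {γ γ₁ γ₂ : ℝ → EuclideanSpace ℝ (Fin 2)}

theorem IsBCPath.trans (h₁ : IsBCPath T₁ x₀ y₀ α x₁ y₁ β γ₁)
    (h₂ : IsBCPath T₂ x₁ y₁ β x₂ y₂ φ γ₂) :
    IsBCPath (T₁ + T₂) x₀ y₀ α x₂ y₂ φ (concatAt T₁ γ₁ γ₂) := by
  obtain ⟨hT₁, γ₁', deriv₁, -, speed₁, lip₁, start₁, start₁', end₁, end₁'⟩ := h₁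
  obtain ⟨hT₂, γ₂', deriv₂, -, speed₂, lip₂, start₂, start₂', end₂, end₂'⟩ := h₂
  have hγ : γ₁ T₁ = γ₂ 0 := WithLp.ofLp_injective 2 (end₁.trans start₂.symm)
  have hγ' : γ₁' T₁ = γ₂' 0 := WithLp.ofLp_injective 2 (end₁'.trans start₂'.symm)
  have lip := lipschitzOnWith_concatAt hγ' lip₁ lip₂
  refine ⟨add_nonneg hT₁ hT₂, concatAt T₁ γ₁' γ₂',
    fun t _ => hasDerivWithinAt_concatAt hT₁ hT₂ hγ hγ' deriv₁ deriv₂ t, lip.continuousOn, ?_, lip,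
    ?_, ?_, ?_, ?_⟩
  · intro t ht
    rcases le_total t T₁ with htT | hTt
    · rw [concatAt_of_le htT, speed₁ t ⟨ht.1, htT⟩]
    · rw [concatAt_of_ge hγ' hTt, speed₂ _ (sub_mem_Icc_zero_of_mem_Icc_add ⟨hTt, ht.2⟩)]
  · rw [concatAt_of_le hT₁, start₁]
  · rw [concatAt_of_le hT₁, start₁']
  · rw [concatAt_add hγ hT₂, end₂]
  · rw [concatAt_add hγ' hT₂, end₂']

lemma isBCPath_sub_two_pi_iff :
    IsBCPath T x₀ y₀ α x₁ y₁ (β - 2 * π) γ ↔ IsBCPath T x₀ y₀ α x₁ y₁ β γ := by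
  simp only [IsBCPath, cos_sub_two_pi, sin_sub_two_pi]

lemma cos_sub_cos_sq_add_sin_sub_sin_sq_le (x y : ℝ) :
    (cos x - cos y) ^ 2 + (sin x - sin y) ^ 2 ≤ (x - y) ^ 2 :=
  calc (cos x - cos y) ^ 2 + (sin x - sin y) ^ 2 = 2 - 2 * cos (x - y) := by
        rw [cos_sub]
        linear_combination sin_sq_add_cos_sq x + sin_sq_add_cos_sq y
    _ ≤ (x - y) ^ 2 := by linarith [one_sub_sq_div_two_le_cos (x := x - y)]

lemma lipschitzWith_direction :
    LipschitzWith 1 fun φ => (!₂[cos φ, sin φ] : EuclideanSpace ℝ (Fin 2)) := by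
  refine LipschitzWith.of_dist_le_mul fun x y => ?_
  rw [NNReal.coe_one, one_mul, EuclideanSpace.dist_eq, Real.dist_eq, ← sqrt_sq_eq_abs]
  refine sqrt_le_sqrt ?_
  simpa [Real.dist_eq, sq_abs] using cos_sub_cos_sq_add_sin_sub_sin_sq_le x y

theorem isBCPath_of_heading {x y ψ : ℝ → ℝ} (hT : 0 ≤ T) (hψ : LipschitzWith 1 ψ)
    (hx : ∀ t, HasDerivAt x (cos (ψ t)) t) (hy : ∀ t, HasDerivAt y (sin (ψ t)) t) :
    IsBCPath T (x 0) (y 0) (ψ 0) (x T) (y T) (ψ T) fun t => !₂[x t, y t] := by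
  have lip : LipschitzWith 1 fun t => (!₂[cos (ψ t), sin (ψ t)] : EuclideanSpace ℝ (Fin 2)) := by
    simpa only [mul_one] using! lipschitzWith_direction.comp hψ
  refine ⟨hT, _, fun t _ => ?_, lip.continuous.continuousOn, fun t _ => ?_, lip.lipschitzOnWith,
    rfl, rfl, rfl, rfl⟩
  · have coordinates : HasDerivAt (fun t => ![x t, y t]) ![cos (ψ t), sin (ψ t)] t :=
      hasDerivAt_pi.2 (Fin.forall_fin_two.2 ⟨hx t, hy t⟩)
    exact ((PiLp.continuousLinearEquiv 2 ℝ fun _ : Fin 2 => ℝ).symm.hasFDerivAt.comp_hasDerivAt t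
      coordinates).hasDerivWithinAt
  · simp [EuclideanSpace.norm_eq]

lemma exists_isBCPath_segment (x y φ : ℝ) (hT : 0 ≤ T) :
    ∃ γ, IsBCPath T x y φ (x + T * cos φ) (y + T * sin φ) φ γ := by
  have line (z v t : ℝ) : HasDerivAt (fun t => z + t * v) v t := by
    simpa using ((hasDerivAt_id t).mul_const v).const_add z
  have path := isBCPath_of_heading hT (LipschitzWith.const' φ)
    (line x (cos φ)) (line y (sin φ))
  simp only [zero_mul, add_zero] at path
  exact ⟨_, path⟩

lemma exists_isBCPath_arc (x y φ : ℝ) {κ : ℝ} (hκ₀ : κ ≠ 0) (hκ₁ : |κ| ≤ 1) (hT : 0 ≤ T) :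
    ∃ γ, IsBCPath T x y φ (x + (sin (φ + κ * T) - sin φ) / κ)
      (y + (cos φ - cos (φ + κ * T)) / κ) (φ + κ * T) γ := by
  have heading (t : ℝ) : HasDerivAt (fun t => φ + κ * t) κ t := by
    simpa using ((hasDerivAt_id t).const_mul κ).const_add φ
  have lip : LipschitzWith 1 fun t => φ + κ * t :=
    LipschitzWith.of_dist_le_mul fun t u => by
      simpa [Real.dist_eq, ← mul_sub, abs_mul] using mul_le_of_le_one_left (abs_nonneg _) hκ₁
  have path := isBCPath_of_heading (x := fun t => x + (sin (φ + κ * t) - sin φ) / κ)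
    (y := fun t => y + (cos φ - cos (φ + κ * t)) / κ) hT lip
    (fun t => by
      simpa [hκ₀] using (((heading t).sin.sub_const (sin φ)).div_const κ).const_add x)
    (fun t => by
      simpa [hκ₀] using (((heading t).cos.const_sub (cos φ)).div_const κ).const_add y)
  simp only [mul_zero, add_zero, sub_self, zero_div] at path
  exact ⟨_, path⟩

lemma exists_isBCPath_left_turn (x y : ℝ) (h : α ≤ β) :
    ∃ γ, IsBCPath (β - α) x y α (x + (sin β - sin α)) (y + (cos α - cos β)) β γ := by
  simpa using exists_isBCPath_arc x y α one_ne_zero abs_one.le (sub_nonneg.2 h)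

lemma exists_isBCPath_right_turn (x y : ℝ) (h : β ≤ α) :
    ∃ γ, IsBCPath (α - β) x y α (x + (sin α - sin β)) (y + (cos β - cos α)) β γ := by
  simpa [div_neg] using exists_isBCPath_arc x y α (neg_ne_zero.2 one_ne_zero)
    (abs_neg (1 : ℝ) ▸ abs_one.le) (sub_nonneg.2 h)

lemma exists_isBCPath_segment_right_turn {s θ : ℝ} (hs : 0 ≤ s) (hβθ : β ≤ θ)
    (hx : x₁ + sin β = x₀ + s * cos θ + sin θ) (hy : y₁ - cos β = y₀ + s * sin θ - cos θ) :
    ∃ γ, IsBCPath (s + (θ - β)) x₀ y₀ θ x₁ y₁ β γ := by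
  obtain ⟨γ₁, segment⟩ := exists_isBCPath_segment x₀ y₀ θ hs
  obtain ⟨γ₂, turn⟩ := exists_isBCPath_right_turn (x₀ + s * cos θ) (y₀ + s * sin θ) hβθ
  rw [show x₀ + s * cos θ + (sin θ - sin β) = x₁ by linarith,
    show y₀ + s * sin θ + (cos β - cos θ) = y₁ by linarith] at turn
  exact ⟨_, segment.trans turn⟩

theorem exists_isBCPath_lsr {s θ : ℝ} (hαθ : α ≤ θ) (hs : 0 ≤ s) (hβθ : β ≤ θ)
    (hx : x₁ + sin β = x₀ - sin α + 2 * sin θ + s * cos θ)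
    (hy : y₁ - cos β = y₀ + cos α - 2 * cos θ + s * sin θ) :
    ∃ γ, IsBCPath (θ - α + (s + (θ - β))) x₀ y₀ α x₁ y₁ β γ := by
  obtain ⟨γ₁, turn⟩ := exists_isBCPath_left_turn x₀ y₀ hαθ
  obtain ⟨γ₂, rest⟩ := exists_isBCPath_segment_right_turn hs hβθ
    (show x₁ + sin β = x₀ + (sin θ - sin α) + s * cos θ + sin θ by linarith)
    (show y₁ - cos β = y₀ + (cos α - cos θ) + s * sin θ - cos θ by linarith)
  exact ⟨_, turn.trans rest⟩

theorem exists_isBCPath_rsr {s θ : ℝ} (hθα : θ ≤ α) (hs : 0 ≤ s) (hβθ : β ≤ θ)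
    (hx : x₁ + sin β = x₀ + sin α + s * cos θ) (hy : y₁ - cos β = y₀ - cos α + s * sin θ) :
    ∃ γ, IsBCPath (α - θ + (s + (θ - β))) x₀ y₀ α x₁ y₁ β γ := by
  obtain ⟨γ₁, turn⟩ := exists_isBCPath_right_turn x₀ y₀ hθα
  obtain ⟨γ₂, rest⟩ := exists_isBCPath_segment_right_turn hs hβθ
    (show x₁ + sin β = x₀ + (sin α - sin θ) + s * cos θ + sin θ by linarith)
    (show y₁ - cos β = y₀ + (cos θ - cos α) + s * sin θ - cos θ by linarith)
  exact ⟨_, turn.trans rest⟩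

end BoundedCurvaturePaths

lemma arg_le_of_im_mul_cos_le_re_mul_sin {z : ℂ} {α : ℝ} (hα : 0 < α)
    (h : z.im * cos α ≤ z.re * sin α) : z.arg ≤ α := by
  rcases eq_or_ne z 0 with rfl | hz
  · simpa using hα.le
  by_contra! hlt
  have hsin : sin (α - z.arg) < 0 :=
    sin_neg_of_neg_of_neg_pi_lt (by linarith) (by linarith [z.arg_le_pi])
  have hcross : ‖z‖ * sin (α - z.arg) = z.re * sin α - z.im * cos α := by
    rw [sin_sub]
    linear_combination sin α * z.norm_mul_cos_arg - cos α * z.norm_mul_sin_arg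
  linarith [mul_neg_of_pos_of_neg (norm_pos_iff.2 hz) hsin]

lemma exists_cos_mul_add_sin_mul_eq {x y r : ℝ} (hy : 0 ≤ y) (hx : x ≤ r)
    (hr : r ≤ √(x ^ 2 + y ^ 2)) :
    ∃ φ ∈ Icc 0 π, cos φ * x + sin φ * y = r ∧ 0 ≤ cos φ * y - sin φ * x := by
  set z : ℂ := ⟨x, y⟩
  have hz : ‖z‖ = √(x ^ 2 + y ^ 2) := z.norm_eq_sqrt_sq_add_sq
  have hre : ‖z‖ * cos z.arg = x := z.norm_mul_cos_arg
  have him : ‖z‖ * sin z.arg = y := z.norm_mul_sin_arg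
  have harg : 0 ≤ z.arg := Complex.arg_nonneg_iff.2 hy
  obtain ⟨φ, hφ, hφr⟩ : ∃ φ ∈ Icc 0 z.arg, ‖z‖ * cos (z.arg - φ) = r := by
    refine intermediate_value_Icc harg (by fun_prop) ⟨?_, ?_⟩
    · simpa only [sub_zero, hre] using hx
    · simpa only [sub_self, cos_zero, mul_one, hz] using hr
  refine ⟨φ, ⟨hφ.1, hφ.2.trans z.arg_le_pi⟩, ?_, ?_⟩
  · rw [cos_sub] at hφr
    linear_combination hφr - cos φ * hre - sin φ * him
  · have hsin : 0 ≤ ‖z‖ * sin (z.arg - φ) := mul_nonneg (norm_nonneg z)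
      (sin_nonneg_of_nonneg_of_le_pi (by linarith [hφ.2]) (by linarith [hφ.1, z.arg_le_pi]))
    rw [sin_sub] at hsin
    linear_combination hsin - sin φ * hre + cos φ * him

-- For `0 < θ < π` this is `tan φ ≤ tan (θ / 2)`, multiplied by `sin θ`.
lemma sin_mul_tan_le_one_sub_cos {θ φ : ℝ} (hφ₀ : 0 ≤ φ) (hφ : φ < π / 2) (hφθ : 2 * φ ≤ θ)
    (hθφ : θ - φ ≤ π) : sin θ * tan φ ≤ 1 - cos θ := by
  have hcos : 0 < cos φ := cos_pos_of_mem_Ioo ⟨by linarith, hφ⟩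
  have hmono : cos (θ - φ) ≤ cos φ := cos_le_cos_of_nonneg_of_le_pi hφ₀ hθφ (by linarith)
  rw [cos_sub] at hmono
  rw [tan_eq_sin_div_cos, mul_div_assoc', div_le_iff₀ hcos]
  linarith

section RSR

/-- The vector from the center of the right starting disk to the center of the right final disk,
for the configurations `(0, 0, α)` and `(d, 0, β)`. -/
noncomputable def rightToRight (d α β : ℝ) : ℂ := ⟨d + sin β - sin α, cos α - cos β⟩

variable {d α β : ℝ}

lemma rightToRight_im_nonneg (hα : 0 ≤ α) (hαβ : α ≤ β) (hβ : β ≤ 2 * π - α) :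
    0 ≤ (rightToRight d α β).im := by
  have hmean : 0 ≤ sin ((α + β) / 2) :=
    sin_nonneg_of_nonneg_of_le_pi (by linarith) (by linarith)
  have hdiff : 0 ≤ sin ((β - α) / 2) :=
    sin_nonneg_of_nonneg_of_le_pi (by linarith) (by linarith)
  calc 0 ≤ 2 * sin ((α + β) / 2) * sin ((β - α) / 2) := by positivity
    _ = cos α - cos β := by
      rw [cos_sub_cos, ← neg_sub β α, neg_div, sin_neg]
      ring

lemma norm_rightToRight_le (hd : 0 ≤ d) (hαβ : α ≤ β) :
    ‖rightToRight d α β‖ ≤ d + (β - α) := by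
  have hsin : sin β - sin α ≤ β - α :=
    (le_abs_self _).trans ((abs_sin_sub_sin_le β α).trans_eq (abs_of_nonneg (sub_nonneg.2 hαβ)))
  have hchord := cos_sub_cos_sq_add_sin_sub_sin_sq_le β α
  rw [Complex.norm_eq_sqrt_sq_add_sq]
  refine sqrt_le_iff.2 ⟨by linarith, ?_⟩
  calc (d + sin β - sin α) ^ 2 + (cos α - cos β) ^ 2
      = d ^ 2 + 2 * (d * (sin β - sin α)) + ((cos β - cos α) ^ 2 + (sin β - sin α) ^ 2) := by ring
    _ ≤ d ^ 2 + 2 * (d * (β - α)) + (β - α) ^ 2 := by gcongr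
    _ = (d + (β - α)) ^ 2 := by ring

lemma arg_rightToRight_le (hd : 0 ≤ d) (hα : 0 ≤ α) (h : 1 - cos (β - α) ≤ d * sin α) :
    (rightToRight d α β).arg ≤ α := by
  rcases hα.eq_or_lt with rfl | hα
  · have hcos : cos β = 1 := by
      rw [sub_zero, sin_zero, mul_zero] at h
      linarith [cos_le_one β]
    have hsin : sin β = 0 := sin_eq_zero_iff_cos_eq.2 (Or.inl hcos)
    have hreal : rightToRight d 0 β = (d : ℂ) := by
      apply Complex.ext <;> simp [rightToRight, hcos, hsin]
    rw [hreal, Complex.arg_ofReal_of_nonneg hd]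
  · refine arg_le_of_im_mul_cos_le_re_mul_sin hα ?_
    rw [cos_sub] at h
    change (cos α - cos β) * cos α ≤ (d + sin β - sin α) * sin α
    linarith [sin_sq_add_cos_sq α]

theorem exists_isBCPath_rsr_length_le (hd : 0 ≤ d) (hα : 0 ≤ α) (hαβ : α ≤ β)
    (hβ : β ≤ 2 * π - α) (h : 1 - cos (β - α) ≤ d * sin α) :
    ∃ T γ, IsBCPath T 0 0 α d 0 β γ ∧ T ≤ d + 2 * π := by
  set z := rightToRight d α β
  have harg : 0 ≤ z.arg := Complex.arg_nonneg_iff.2 (rightToRight_im_nonneg hα hαβ hβ)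
  have hre : ‖z‖ * cos z.arg = d + sin β - sin α := z.norm_mul_cos_arg
  have him : ‖z‖ * sin z.arg = cos α - cos β := z.norm_mul_sin_arg
  obtain ⟨γ, hγ⟩ := exists_isBCPath_rsr (x₀ := 0) (y₀ := 0) (x₁ := d) (y₁ := 0) (β := β - 2 * π)
    (arg_rightToRight_le hd hα h) (norm_nonneg z) (by linarith)
    (by rw [sin_sub_two_pi]; linarith) (by rw [cos_sub_two_pi]; linarith)
  exact ⟨_, γ, isBCPath_sub_two_pi_iff.1 hγ, by linarith [norm_rightToRight_le hd hαβ]⟩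

end RSR

section LSR

/-- The component, along the direction `θ`, of the vector from the center of the left starting
disk to the center of the right final disk, for the configurations `(0, 0, α)` and `(d, 0, β)`. -/
noncomputable def centerAdvance (d α β θ : ℝ) : ℝ :=
  d * cos θ - (sin (θ - α) + sin (θ - β))

/-- The component, along the right normal of the direction `θ`, of the vector from the center of
the left starting disk to the center of the right final disk, for the configurations `(0, 0, α)`
and `(d, 0, β)`. A common tangent of direction `θ` separating the disks has offset `2`. -/
noncomputable def centerOffset (d α β θ : ℝ) : ℝ :=
  d * sin θ + (cos (θ - α) + cos (θ - β))

variable {d α β θ : ℝ}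

lemma centerAdvance_add (φ : ℝ) : centerAdvance d α β (θ + φ) =
    cos φ * centerAdvance d α β θ - sin φ * centerOffset d α β θ := by
  simp only [centerAdvance, centerOffset, add_sub_right_comm θ φ, sin_add, cos_add]
  ring

lemma centerOffset_add (φ : ℝ) : centerOffset d α β (θ + φ) =
    cos φ * centerOffset d α β θ + sin φ * centerAdvance d α β θ := by
  simp only [centerAdvance, centerOffset, add_sub_right_comm θ φ, sin_add, cos_add]
  ring

lemma advance_mul_cos_add_offset_mul_sin (d α β θ : ℝ) :
    centerAdvance d α β θ * cos θ + centerOffset d α β θ * sin θ = d + sin β + sin α := by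
  simp only [centerAdvance, centerOffset, sin_sub, cos_sub]
  linear_combination (d + sin β + sin α) * sin_sq_add_cos_sq θ

lemma offset_mul_cos_sub_advance_mul_sin (d α β θ : ℝ) :
    centerOffset d α β θ * cos θ - centerAdvance d α β θ * sin θ = cos β + cos α := by
  simp only [centerAdvance, centerOffset, sin_sub, cos_sub]
  linear_combination (cos β + cos α) * sin_sq_add_cos_sq θ

lemma offset_sq_add_advance_sq (d α β θ : ℝ) :
    centerOffset d α β θ ^ 2 + centerAdvance d α β θ ^ 2 =
      (d + sin β + sin α) ^ 2 + (cos β + cos α) ^ 2 := by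
  rw [← advance_mul_cos_add_offset_mul_sin d α β θ, ← offset_mul_cos_sub_advance_mul_sin d α β θ]
  linear_combination (-centerOffset d α β θ ^ 2 - centerAdvance d α β θ ^ 2) *
    sin_sq_add_cos_sq θ

lemma four_mul_sin_sq_half_le
    (hdisj : 4 ≤ (d + sin β + sin α) ^ 2 + (cos β + cos α) ^ 2) :
    4 * sin ((β - α) / 2) ^ 2 ≤ d ^ 2 + 4 * (d * sin ((β + α) / 2)) * cos ((β - α) / 2) := by
  rw [add_assoc d, sin_add_sin, cos_add_cos] at hdisj
  linear_combination hdisj + 4 * cos ((β - α) / 2) ^ 2 * sin_sq_add_cos_sq ((β + α) / 2) +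
    4 * sin_sq_add_cos_sq ((β - α) / 2)

lemma mul_cos_add_sin_two_mul_nonneg_of_cos_nonneg {δ : ℝ} (hsin : 0 < sin δ) (hcos : 0 ≤ cos δ)
    (hmean : 0 ≤ d * sin (α + δ)) (h : d * sin α ≤ 2 * sin δ ^ 2) :
    0 ≤ d * cos α + sin (2 * δ) := by
  refine nonneg_of_mul_nonneg_right ?_ hsin
  calc 0 ≤ d * sin α * cos δ + d * cos α * sin δ := by
        rw [sin_add] at hmean
        linarith
    _ ≤ 2 * sin δ ^ 2 * cos δ + d * cos α * sin δ := by gcongr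
    _ = sin δ * (d * cos α + sin (2 * δ)) := by
        rw [sin_two_mul]
        ring

lemma mul_cos_add_sin_two_mul_nonneg_of_sq_le {δ : ℝ} (hsin : 0 ≤ d * sin α) (hcos : 0 ≤ d * cos α)
    (hd : 4 * sin δ ^ 2 ≤ d ^ 2) (h : d * sin α < 2 * sin δ ^ 2) :
    0 ≤ d * cos α + sin (2 * δ) := by
  by_contra! hneg
  have hlt : d * cos α < -sin (2 * δ) := by linarith
  refine hd.not_gt ?_
  calc d ^ 2 = (d * sin α) ^ 2 + (d * cos α) ^ 2 := by
        linear_combination -d ^ 2 * sin_sq_add_cos_sq α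
    _ < (2 * sin δ ^ 2) ^ 2 + (-sin (2 * δ)) ^ 2 := by gcongr
    _ = 4 * sin δ ^ 2 := by
        rw [sin_two_mul]
        linear_combination 4 * sin δ ^ 2 * sin_sq_add_cos_sq δ

lemma centerAdvance_self_nonneg (hd : 0 ≤ d) (hα : 0 ≤ α) (hαβ : α ≤ β) (hβ : β ≤ 2 * π - α)
    (hdisj : 4 ≤ (d + sin β + sin α) ^ 2 + (cos β + cos α) ^ 2)
    (h : d * sin α < 1 - cos (β - α)) : 0 ≤ centerAdvance d α β α := by
  replace hdisj := four_mul_sin_sq_half_le hdisj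
  obtain ⟨δ, rfl⟩ : ∃ δ, β = α + 2 * δ := ⟨(β - α) / 2, by ring⟩
  rw [show (α + 2 * δ - α) / 2 = δ by ring, show (α + 2 * δ + α) / 2 = α + δ by ring] at hdisj
  rw [add_sub_cancel_left, cos_two_mul'] at h
  rw [centerAdvance, sub_self, sin_zero, zero_add, sub_add_cancel_left, sin_neg, sub_neg_eq_add]
  have hmean : 0 ≤ d * sin (α + δ) :=
    mul_nonneg hd (sin_nonneg_of_nonneg_of_le_pi (by linarith) (by linarith))
  have hdα : 0 ≤ d * sin α :=
    mul_nonneg hd (sin_nonneg_of_nonneg_of_le_pi hα (by linarith))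
  have hlt : d * sin α < 2 * sin δ ^ 2 := by linarith [sin_sq_add_cos_sq δ]
  rcases le_total δ (π / 2) with hδ | hδ
  · have hsin : 0 ≤ sin δ := sin_nonneg_of_nonneg_of_le_pi (by linarith) (by linarith)
    have hsin_ne : sin δ ≠ 0 := fun h0 => by
      rw [h0] at hlt
      linarith
    exact mul_cos_add_sin_two_mul_nonneg_of_cos_nonneg (hsin.lt_of_ne' hsin_ne)
      (cos_nonneg_of_neg_pi_div_two_le_of_le (by linarith) hδ) hmean hlt.le
  · have hcosδ : cos δ ≤ 0 := cos_nonpos_of_pi_div_two_le_of_le hδ (by linarith)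
    have hcosα : 0 ≤ cos α := cos_nonneg_of_neg_pi_div_two_le_of_le (by linarith) (by linarith)
    exact mul_cos_add_sin_two_mul_nonneg_of_sq_le hdα (mul_nonneg hd hcosα)
      (by linarith [mul_nonpos_of_nonneg_of_nonpos hmean hcosδ]) hlt

lemma exists_separating_tangent_direction (hd : 0 ≤ d) (hα : 0 ≤ α) (hαβ : α ≤ β)
    (hβ : β ≤ 2 * π - α) (hdisj : 2 ≤ √((d + sin β + sin α) ^ 2 + (cos β + cos α) ^ 2))
    (h : d * sin α < 1 - cos (β - α)) :
    ∃ θ ∈ Icc α (α + π), centerOffset d α β θ = 2 ∧ 0 ≤ centerAdvance d α β θ := by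
  have hadvance : 0 ≤ centerAdvance d α β α := by
    refine centerAdvance_self_nonneg hd hα hαβ hβ ?_ h
    linarith [(le_sqrt' two_pos).1 hdisj]
  have hoffset : centerOffset d α β α ≤ 2 := by
    rw [centerOffset, sub_self, cos_zero, ← neg_sub β α, cos_neg]
    linarith
  rw [← offset_sq_add_advance_sq d α β α] at hdisj
  obtain ⟨φ, hφ, htangent, hforward⟩ := exists_cos_mul_add_sin_mul_eq hadvance hoffset hdisj
  refine ⟨α + φ, ⟨by linarith [hφ.1], by linarith [hφ.2]⟩, ?_, ?_⟩
  · rw [centerOffset_add, htangent]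
  · rwa [centerAdvance_add]

lemma centerAdvance_le (hd : 0 ≤ d) (hαβ : α ≤ β) (hβθ : β ≤ θ) (hθ : θ ≤ α + π) :
    centerAdvance d α β θ ≤ d := by
  have hsinα : 0 ≤ sin (θ - α) := sin_nonneg_of_nonneg_of_le_pi (by linarith) (by linarith)
  have hsinβ : 0 ≤ sin (θ - β) := sin_nonneg_of_nonneg_of_le_pi (by linarith) (by linarith)
  have hcos : d * cos θ ≤ d := mul_le_of_le_one_right hd (cos_le_one θ)
  rw [centerAdvance]
  linarith

lemma le_sin_mul_cos_of_nonpos {φ : ℝ} (hφ : φ ≤ 0) (δ : ℝ) : φ ≤ sin φ * cos δ := by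
  have habs : |sin φ * cos δ| ≤ -φ := by
    rw [abs_mul, ← abs_of_nonpos hφ]
    exact (mul_le_of_le_one_right (abs_nonneg _) (abs_cos_le_one δ)).trans abs_sin_le_abs
  linarith [neg_abs_le (sin φ * cos δ)]

lemma two_mul_sub_sin_mul_cos_le {φ δ : ℝ} (hd : 0 ≤ d) (hφ : φ < π / 2) (hφθ : 2 * φ ≤ θ)
    (hθφ : θ - φ ≤ π) (hoffset : d * sin θ + 2 * cos φ * cos δ = 2) :
    2 * φ - 2 * sin φ * cos δ ≤ d * (1 - cos θ) := by
  rcases le_total φ 0 with hφ₀ | hφ₀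
  · have hnonneg : 0 ≤ d * (1 - cos θ) := mul_nonneg hd (sub_nonneg.2 (cos_le_one θ))
    linarith [le_sin_mul_cos_of_nonpos hφ₀ δ]
  · have hcos : cos φ ≠ 0 := (cos_pos_of_mem_Ioo ⟨by linarith, hφ⟩).ne'
    calc 2 * φ - 2 * sin φ * cos δ ≤ 2 * tan φ - 2 * sin φ * cos δ := by
          linarith [le_tan hφ₀ hφ]
      _ = (2 - 2 * cos φ * cos δ) * tan φ := by
          linear_combination 2 * cos δ * tan_mul_cos hcos
      _ = d * (sin θ * tan φ) := by linear_combination -tan φ * hoffset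
      _ ≤ d * (1 - cos θ) := by
          gcongr
          exact sin_mul_tan_le_one_sub_cos hφ₀ hφ hφθ hθφ

lemma turning_add_centerAdvance_le (hd : 0 ≤ d) (hα : 0 ≤ α) (hβ : β ≤ 2 * π - α)
    (hθ : θ ≤ α + π) (hθβ : θ < β) (hoffset : centerOffset d α β θ = 2) :
    (θ - α) + (θ - β) + centerAdvance d α β θ ≤ d := by
  have hsum : (θ - α) + (θ - β) = 2 * (θ - (α + β) / 2) := by ring
  have hdiff : ((θ - α) - (θ - β)) / 2 = (β - α) / 2 := by ring
  rw [centerOffset, cos_add_cos, hdiff, hsum, mul_div_cancel_left₀ _ two_ne_zero] at hoffset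
  rw [centerAdvance, sin_add_sin, hdiff, hsum, mul_div_cancel_left₀ _ two_ne_zero]
  linarith [two_mul_sub_sin_mul_cos_le hd (by linarith) (by linarith) (by linarith) hoffset]

theorem exists_isBCPath_lsr_length_le (hd : 0 ≤ d) (hα : 0 ≤ α) (hαβ : α ≤ β)
    (hβ : β ≤ 2 * π - α) (hdisj : 2 ≤ √((d + sin β + sin α) ^ 2 + (cos β + cos α) ^ 2))
    (h : d * sin α < 1 - cos (β - α)) :
    ∃ T γ, IsBCPath T 0 0 α d 0 β γ ∧ T ≤ d + 2 * π := by
  obtain ⟨θ, ⟨hαθ, hθ⟩, hoffset, hadvance⟩ :=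
    exists_separating_tangent_direction hd hα hαβ hβ hdisj h
  have hx := advance_mul_cos_add_offset_mul_sin d α β θ
  have hy := offset_mul_cos_sub_advance_mul_sin d α β θ
  rw [hoffset] at hx hy
  rcases le_or_gt β θ with hβθ | hθβ
  · obtain ⟨γ, hγ⟩ := exists_isBCPath_lsr (x₀ := 0) (y₀ := 0) (x₁ := d) (y₁ := 0)
      hαθ hadvance hβθ (by linarith) (by linarith)
    exact ⟨_, γ, hγ, by linarith [centerAdvance_le hd hαβ hβθ hθ]⟩
  · obtain ⟨γ, hγ⟩ := exists_isBCPath_lsr (x₀ := 0) (y₀ := 0) (x₁ := d) (y₁ := 0)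
      (β := β - 2 * π) hαθ hadvance (by linarith)
      (by rw [sin_sub_two_pi]; linarith) (by rw [cos_sub_two_pi]; linarith)
    exact ⟨_, γ, isBCPath_sub_two_pi_iff.1 hγ,
      by linarith [turning_add_centerAdvance_le hd hα hβ hθ hθβ hoffset]⟩

end LSR

/-- Let `d ≥ 0` and `0 ≤ α ≤ π`, `α ≤ β ≤ 2π - α`.  If the
left starting disk and the right final disk are disjoint, i.e.
`√((d + sin β + sin α)² + (cos β + cos α)²) ≥ 2`, then there is a
bounded-curvature path from `(0, 0, α)` to `(d, 0, β)` of length at most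
`d + 2π`. -/
theorem case_c_upper_bound (d α β : ℝ) (hd : 0 ≤ d)
    (hα0 : 0 ≤ α) (hαπ : α ≤ π) (hαβ : α ≤ β) (hβ : β ≤ 2 * π - α)
    (hdisj : 2 ≤ Real.sqrt ((d + Real.sin β + Real.sin α) ^ 2 +
      (Real.cos β + Real.cos α) ^ 2)) :
    ∃ (T : ℝ) (γ : ℝ → EuclideanSpace ℝ (Fin 2)),
      IsBCPath T 0 0 α d 0 β γ ∧ T ≤ d + 2 * π := by
  rcases le_or_gt (1 - cos (β - α)) (d * sin α) with h | h
  · exact exists_isBCPath_rsr_length_le hd hα0 hαβ hβ h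
  · exact exists_isBCPath_lsr_length_le hd hα0 hαβ hβ hdisj h
end

section
/- Let d > 0. Every bounded-curvature path from configuration (0,0,π) to (d,0,π) has length at least d + 2π; that is, if γ is a bounded-curvature path of length T from (0,0,π) to (d,0,π), then T ≥ d + 2π. -/
open Real

/-!
Write the direction of the path as `exp (iθ)` with a continuous heading `θ` starting at `π`; the
curvature bound makes `θ` `1`-Lipschitz. As `1 - cos θ` is both the derivative of `θ - sin θ`
in `θ` and the time derivative of `t - Re z` along the path `z`, the total variation of `θ - sin θ`
is at most `T - d`, and it remains to see that this variation is at least `2π`.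

If `cos θ = 1` at some time, then `θ - sin θ = θ` moves by at least `π` before and by at least `π`
after that time. Otherwise `θ` stays in `(0, 2π)` and ends at `π`. The displacement is opposite to
the initial direction, so the directions do not fit into an open half-plane: there are `p`, `q`
with `θ q - θ p ≥ π`. Then `sin (θ q) ≤ 0 ≤ sin (θ p)`, so `θ - sin θ` differs by at least `π`
between `p` and `q`, and since it returns to its initial value it varies by at least `2π`.
-/

open Set Filter Topology

section LocalSpeed

variable {X E : Type*} [PseudoMetricSpace X] [NormedAddCommGroup E] [NormedSpace ℝ E]

theorem dist_le_sub_of_eventually_dist_le {f : ℝ → X} {B B' : ℝ → ℝ} {a b : ℝ} (hab : a ≤ b)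
    (hf : ContinuousOn f (Icc a b))
    (hB : ∀ t ∈ Icc a b, HasDerivWithinAt B (B' t) (Icc a b) t)
    (bound : ∀ t ∈ Ico a b, ∀ r, B' t < r → ∀ᶠ u in 𝓝[>] t, dist (f u) (f t) ≤ r * (u - t)) :
    dist (f b) (f a) ≤ B b - B a := by
  refine image_le_of_liminf_slope_right_le_deriv_boundary (f := fun t ↦ dist (f t) (f a))
    (B := fun t ↦ B t - B a) (B' := B') (by fun_prop) (by simp)
    (fun t ht ↦ (hB t ht).continuousWithinAt.sub continuousWithinAt_const)
    (fun t ht ↦ ((hB t (Ico_subset_Icc_self ht)).mono_of_mem_nhdsWithin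
      (Icc_mem_nhdsGE_of_mem ht)).sub_const _)
    (fun t ht r hr ↦ Eventually.frequently ?_) (right_mem_Icc.2 hab)
  obtain ⟨q, hBq, hqr⟩ := exists_between hr
  filter_upwards [bound t ht q hBq, self_mem_nhdsWithin] with u hu htu
  have hpos : 0 < u - t := sub_pos.2 htu
  rw [slope_def_field, div_lt_iff₀ hpos]
  calc dist (f u) (f a) - dist (f t) (f a)
      ≤ dist (f u) (f t) := by linarith [dist_triangle (f u) (f t) (f a)]
    _ ≤ q * (u - t) := hu
    _ < r * (u - t) := by gcongr

theorem eventually_dist_le_mul_dist_of_hasDerivAt {g : ℝ → E} {g' : E} {x r : ℝ}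
    (hg : HasDerivAt g g' x) (hr : ‖g'‖ < r) : ∀ᶠ y in 𝓝 x, dist (g y) (g x) ≤ r * dist y x := by
  have hslope := (hg.hasDerivWithinAt (s := univ)).limsup_norm_slope_le hr
  rw [nhdsWithin_univ] at hslope
  filter_upwards [hslope] with y hy
  rcases eq_or_ne y x with rfl | hne
  · simp
  · rw [← dist_eq_norm, ← dist_eq_norm, inv_mul_lt_iff₀ (dist_pos.2 hne)] at hy
    linarith

theorem eventually_mul_dist_le_dist_of_hasDerivAt {g : ℝ → E} {g' : E} {x r : ℝ}
    (hg : HasDerivAt g g' x) (hr : r < ‖g'‖) : ∀ᶠ y in 𝓝 x, r * dist y x ≤ dist (g y) (g x) := by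
  have hslope := (hasDerivAt_iff_tendsto_slope.1 hg).norm.eventually_const_lt hr
  rw [eventually_nhdsWithin_iff] at hslope
  filter_upwards [hslope] with y hy
  rcases eq_or_ne y x with rfl | hne
  · simp
  · have := hy hne
    rw [slope_def_module, norm_smul, norm_inv, ← dist_eq_norm, ← dist_eq_norm,
      lt_inv_mul_iff₀ (dist_pos.2 hne)] at this
    linarith

variable {θ : ℝ → ℝ} {K : NNReal}

theorem lipschitzOnWith_of_comp_of_one_le_norm_deriv {g g' : ℝ → E} {s : Set ℝ} [s.OrdConnected]
    (hg : ∀ x, HasDerivAt g (g' x) x) (hg' : ∀ x, 1 ≤ ‖g' x‖) (hθ : ContinuousOn θ s)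
    (hlip : LipschitzOnWith K (g ∘ θ) s) : LipschitzOnWith K θ s := by
  refine LipschitzOnWith.of_dist_le_mul fun x hx y hy ↦ ?_
  wlog hxy : x ≤ y generalizing x y
  · rw [dist_comm, dist_comm x]
    exact this y hy x hx (le_of_not_ge hxy)
  rw [dist_comm, dist_comm x, dist_eq y, abs_of_nonneg (sub_nonneg.2 hxy), mul_sub]
  have hsub : Icc x y ⊆ s := OrdConnected.out ‹_› hx hy
  refine dist_le_sub_of_eventually_dist_le (B := fun t ↦ K * t) (B' := fun _ ↦ K) hxy
    (hθ.mono hsub) (fun t _ ↦ by simpa using (hasDerivWithinAt_id t _).const_mul (K : ℝ)) ?_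
  intro t ht r hr
  have hrpos : 0 < r := K.coe_nonneg.trans_lt hr
  obtain ⟨q, hqr, hq1⟩ := exists_between ((div_lt_one hrpos).2 hr)
  have hqpos : 0 < q := (by positivity : 0 ≤ (K : ℝ) / r).trans_lt hqr
  have hθt : Tendsto θ (𝓝[>] t) (𝓝 (θ t)) :=
    (hθ.mono hsub t (Ico_subset_Icc_self ht)).tendsto.mono_left
      (nhdsWithin_le_of_mem (Icc_mem_nhdsGT_of_mem ht))
  filter_upwards [hθt.eventually
      (eventually_mul_dist_le_dist_of_hasDerivAt (hg (θ t)) (hq1.trans_le (hg' _))),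
    Ioc_mem_nhdsGT ht.2] with u hu htu
  refine le_of_mul_le_mul_left ?_ hqpos
  calc q * dist (θ u) (θ t) ≤ dist (g (θ u)) (g (θ t)) := hu
    _ ≤ K * dist u t := hlip.dist_le_mul u (hsub ⟨ht.1.trans htu.1.le, htu.2⟩) t
        (hsub (Ico_subset_Icc_self ht))
    _ = K * (u - t) := by rw [dist_eq, abs_of_pos (sub_pos.2 htu.1)]
    _ ≤ (q * r) * (u - t) := by
        have hKqr : K ≤ q * r := ((div_lt_iff₀ hrpos).1 hqr).le
        exact mul_le_mul_of_nonneg_right hKqr (sub_nonneg.2 htu.1.le)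
    _ = q * (r * (u - t)) := mul_assoc ..

theorem lipschitzOnWith_of_exp_mul_I {s : Set ℝ} [s.OrdConnected] (hθ : ContinuousOn θ s)
    (hlip : LipschitzOnWith K (fun t ↦ Complex.exp (θ t * Complex.I)) s) :
    LipschitzOnWith K θ s := by
  have hderiv (x : ℝ) : HasDerivAt (fun φ : ℝ ↦ Complex.exp (φ * Complex.I))
      (Complex.exp (x * Complex.I) * Complex.I) x := by
    simpa using ((hasDerivAt_id x).ofReal_comp.mul_const Complex.I).cexp
  exact lipschitzOnWith_of_comp_of_one_le_norm_deriv hderiv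
    (fun x ↦ by simp [Complex.norm_exp_ofReal_mul_I]) hθ hlip

theorem dist_comp_le_sub_of_lipschitzOnWith {g g' : ℝ → E} {B : ℝ → ℝ} {a b : ℝ} (hab : a ≤ b)
    (hg : ∀ x, HasDerivAt g (g' x) x) (hθ : LipschitzOnWith K θ (Icc a b))
    (hB : ∀ t ∈ Icc a b, HasDerivWithinAt B (K * ‖g' (θ t)‖) (Icc a b) t) :
    dist (g (θ b)) (g (θ a)) ≤ B b - B a := by
  refine dist_le_sub_of_eventually_dist_le (f := g ∘ θ) hab
    ((continuous_iff_continuousAt.2 fun x ↦ (hg x).continuousAt).comp_continuousOn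
      hθ.continuousOn) hB ?_
  intro t ht r hr
  obtain ⟨q, hgq, hqr⟩ : ∃ q, ‖g' (θ t)‖ < q ∧ K * q < r := by
    have hlim : Tendsto (fun q : ℝ ↦ K * q) (𝓝[>] ‖g' (θ t)‖) (𝓝 (K * ‖g' (θ t)‖)) :=
      (tendsto_id.mono_left nhdsWithin_le_nhds).const_mul _
    exact (eventually_mem_nhdsWithin.and (hlim.eventually_lt_const hr)).exists
  have hqpos : 0 < q := (norm_nonneg _).trans_lt hgq
  have hθt : Tendsto θ (𝓝[>] t) (𝓝 (θ t)) :=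
    (hθ.continuousOn t (Ico_subset_Icc_self ht)).tendsto.mono_left
      (nhdsWithin_le_of_mem (Icc_mem_nhdsGT_of_mem ht))
  filter_upwards [hθt.eventually (eventually_dist_le_mul_dist_of_hasDerivAt (hg (θ t)) hgq),
    Ioc_mem_nhdsGT ht.2] with u hu htu
  have hpos : 0 < u - t := sub_pos.2 htu.1
  calc dist (g (θ u)) (g (θ t)) ≤ q * dist (θ u) (θ t) := hu
    _ ≤ q * (K * dist u t) := by
        gcongr
        exact hθ.dist_le_mul u ⟨ht.1.trans htu.1.le, htu.2⟩ t (Ico_subset_Icc_self ht)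
    _ = (K * q) * (u - t) := by rw [dist_eq, abs_of_pos hpos]; ring
    _ ≤ r * (u - t) := by gcongr

theorem two_mul_dist_le_sub_of_endpoints_eq {ι : Type*} [LinearOrder ι] {f : ι → X} {L : ι → ℝ}
    {a b p q : ι} (hL : ∀ s ∈ Icc a b, ∀ t ∈ Icc a b, s ≤ t → dist (f t) (f s) ≤ L t - L s)
    (hf : f a = f b) (hp : p ∈ Icc a b) (hq : q ∈ Icc a b) :
    2 * dist (f p) (f q) ≤ L b - L a := by
  wlog hpq : p ≤ q generalizing p q
  · rw [dist_comm]
    exact this hq hp (le_of_not_ge hpq)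
  have hab : a ≤ b := hp.1.trans hp.2
  have hap := hL a (left_mem_Icc.2 hab) p hp hp.1
  have hqp := hL p hp q hq hpq
  have hbq := hL q hq b (right_mem_Icc.2 hab) hq.2
  have htri := dist_triangle (f p) (f a) (f q)
  rw [hf] at hap htri
  rw [dist_comm] at hqp
  linarith

end LocalSpeed

theorem exists_continuous_angle {u : ℝ → ℂ} {a b α : ℝ} (hab : a ≤ b)
    (hu : ContinuousOn u (Icc a b)) (hnorm : ∀ t ∈ Icc a b, ‖u t‖ = 1)
    (hα : Complex.exp (α * Complex.I) = u a) :
    ∃ θ : ℝ → ℝ, Continuous θ ∧ θ a = α ∧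
      ∀ t ∈ Icc a b, Complex.exp (θ t * Complex.I) = u t := by
  let u₁ : C(Icc a b, Circle) :=
    ⟨fun t ↦ ⟨u t, mem_sphere_zero_iff_norm.2 (hnorm t t.2)⟩,
      hu.domRestrict.subtype_mk fun t ↦ mem_sphere_zero_iff_norm.2 (hnorm t t.2)⟩
  let v : C(ℝ, Circle) := ⟨IccExtend hab u₁, u₁.continuous.Icc_extend'⟩
  have hv : ∀ t ∈ Icc a b, (v t : ℂ) = u t := fun t ht ↦ by
    simp only [v, ContinuousMap.coe_mk, IccExtend_of_mem hab u₁ ht]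
    rfl
  have hva : Circle.exp α = v a := Subtype.ext <| by
    rw [Circle.coe_exp, hα, hv a (left_mem_Icc.2 hab)]
  obtain ⟨θ, ⟨hθa, hθ⟩, -⟩ := Circle.isCoveringMap_exp.existsUnique_continuousMap_lifts v a α hva
  refine ⟨θ, θ.continuous, hθa, fun t ht ↦ ?_⟩
  rw [← hv t ht, ← Circle.coe_exp]
  exact congrArg Subtype.val (congrFun hθ t)

theorem pi_le_abs_sub_of_cos_eq {α β : ℝ} (hα : cos α = 1) (hβ : cos β = -1) : π ≤ |α - β| := by
  have hsin : sin α = 0 := sin_eq_zero_iff_cos_eq.2 (.inl hα)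
  have hcos : cos |α - β| = -1 := by rw [cos_abs, cos_sub, hα, hβ, hsin]; norm_num
  by_contra! hlt
  have := cos_lt_cos_of_nonneg_of_le_pi (abs_nonneg _) le_rfl hlt
  rw [hcos, cos_pi] at this
  exact lt_irrefl _ this

theorem mem_Ioo_zero_two_pi_of_cos_ne_one {θ : ℝ → ℝ} {s : Set ℝ} (hs : IsPreconnected s)
    (hθ : ContinuousOn θ s) (hcos : ∀ t ∈ s, cos (θ t) ≠ 1) {a t : ℝ} (ha : a ∈ s)
    (hθa : θ a ∈ Ioo 0 (2 * π)) (ht : t ∈ s) : θ t ∈ Ioo 0 (2 * π) := by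
  have himage : (θ '' s).OrdConnected := (hs.image θ hθ).ordConnected
  have hta := himage.out (mem_image_of_mem θ ht) (mem_image_of_mem θ ha)
  have hat := himage.out (mem_image_of_mem θ ha) (mem_image_of_mem θ ht)
  constructor
  · by_contra! hle
    obtain ⟨r, hr, hr0⟩ := hta ⟨hle, hθa.1.le⟩
    exact hcos r hr (by rw [hr0, cos_zero])
  · by_contra! hle
    obtain ⟨r, hr, hr2⟩ := hat ⟨hθa.2.le, hle⟩
    exact hcos r hr (by rw [hr2, cos_two_pi])

theorem eq_pi_of_cos_eq_neg_one {α : ℝ} (hα : α ∈ Ioo 0 (2 * π)) (hcos : cos α = -1) : α = π := by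
  have hzero := pi_le_abs_sub_of_cos_eq cos_zero hcos
  have htwo := pi_le_abs_sub_of_cos_eq cos_two_pi hcos
  rw [zero_sub, abs_neg, abs_of_pos hα.1] at hzero
  rw [abs_of_pos (sub_pos.2 hα.2)] at htwo
  linarith

/-- `θ` is a heading along the plane path `z` over `[a, b]`: the path has unit speed in the
direction `exp (iθ)`, and the curvature bound is expressed by `θ` being `1`-Lipschitz. Unlike the
direction itself, `θ` is not reduced modulo `2π`, so it records full turns. -/
structure IsHeading (θ : ℝ → ℝ) (z : ℝ → ℂ) (a b : ℝ) : Prop where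
  lipschitzOnWith : LipschitzOnWith 1 θ (Icc a b)
  hasDerivWithinAt : ∀ t ∈ Icc a b,
    HasDerivWithinAt z (Complex.exp (θ t * Complex.I)) (Icc a b) t

namespace IsHeading

variable {θ : ℝ → ℝ} {z : ℝ → ℂ} {a b s t d : ℝ}

theorem mono (h : IsHeading θ z a b) (hst : Icc s t ⊆ Icc a b) : IsHeading θ z s t where
  lipschitzOnWith := h.lipschitzOnWith.mono hst
  hasDerivWithinAt r hr := (h.hasDerivWithinAt r (hst hr)).mono hst

theorem hasDerivWithinAt_re (h : IsHeading θ z a b) (ht : t ∈ Icc a b) :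
    HasDerivWithinAt (fun r ↦ (z r).re) (cos (θ t)) (Icc a b) t := by
  rw [← Complex.exp_ofReal_mul_I_re]
  exact Complex.reCLM.hasFDerivAt.comp_hasDerivWithinAt t (h.hasDerivWithinAt t ht)

theorem hasDerivWithinAt_im (h : IsHeading θ z a b) (ht : t ∈ Icc a b) :
    HasDerivWithinAt (fun r ↦ (z r).im) (sin (θ t)) (Icc a b) t := by
  rw [← Complex.exp_ofReal_mul_I_im]
  exact Complex.imCLM.hasFDerivAt.comp_hasDerivWithinAt t (h.hasDerivWithinAt t ht)

theorem dist_sub_sin_le (h : IsHeading θ z a b) (hs : s ∈ Icc a b) (ht : t ∈ Icc a b)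
    (hst : s ≤ t) :
    dist (θ t - sin (θ t)) (θ s - sin (θ s)) ≤ (t - (z t).re) - (s - (z s).re) := by
  have hst' := h.mono (Icc_subset_Icc hs.1 ht.2)
  refine dist_comp_le_sub_of_lipschitzOnWith (g := fun x ↦ x - sin x) (g' := fun x ↦ 1 - cos x)
    (B := fun r ↦ r - (z r).re) hst
    (fun x ↦ (hasDerivAt_id x).sub (hasDerivAt_sin x)) hst'.lipschitzOnWith fun r hr ↦ ?_
  rw [norm_of_nonneg (sub_nonneg.2 (cos_le_one _)), NNReal.coe_one, one_mul]
  exact (hasDerivWithinAt_id r _).sub (hst'.hasDerivWithinAt_re hr)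

theorem displacement_nonneg_of_abs_sub_le (h : IsHeading θ z a b) (hab : a ≤ b) {c : ℝ}
    (hc : ∀ t ∈ Icc a b, |θ t - c| ≤ π / 2) :
    0 ≤ (z b - z a).re * cos c + (z b - z a).im * sin c := by
  have hderiv : ∀ t ∈ Icc a b, HasDerivWithinAt (fun r ↦ (z r).re * cos c + (z r).im * sin c)
      (cos (θ t - c)) (Icc a b) t := fun t ht ↦ by
    rw [cos_sub]
    exact ((h.hasDerivWithinAt_re ht).mul_const _).add ((h.hasDerivWithinAt_im ht).mul_const _)
  have hmono : MonotoneOn (fun r ↦ (z r).re * cos c + (z r).im * sin c) (Icc a b) :=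
    monotoneOn_of_hasDerivWithinAt_nonneg (convex_Icc a b)
      (fun t ht ↦ (hderiv t ht).continuousWithinAt)
      (fun t ht ↦ (hderiv t (interior_subset ht)).mono interior_subset)
      (fun t ht ↦ cos_nonneg_of_mem_Icc (abs_le.1 (hc t (interior_subset ht))))
  have hends := hmono (left_mem_Icc.2 hab) (right_mem_Icc.2 hab) hab
  simp only [Complex.sub_re, Complex.sub_im]
  linarith

-- Otherwise all headings lie strictly within a right angle of the midpoint `c` of their range, so
-- the displacement has nonnegative component along `c`; but `-exp (iθ s)` has a negative one.
theorem exists_pi_le_sub (h : IsHeading θ z a b) (hd : 0 < d) (hs : s ∈ Icc a b)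
    (hz : z b - z a = -(d * Complex.exp (θ s * Complex.I))) :
    ∃ p ∈ Icc a b, ∃ q ∈ Icc a b, π ≤ θ q - θ p := by
  have hcont := h.lipschitzOnWith.continuousOn
  obtain ⟨p, hp, hmin⟩ := isCompact_Icc.exists_isMinOn ⟨s, hs⟩ hcont
  obtain ⟨q, hq, hmax⟩ := isCompact_Icc.exists_isMaxOn ⟨s, hs⟩ hcont
  refine ⟨p, hp, q, hq, ?_⟩
  by_contra! hlt
  set c := (θ p + θ q) / 2 with hc
  have hnear : ∀ t ∈ Icc a b, |θ t - c| < π / 2 := fun t ht ↦ by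
    have hpt : θ p ≤ θ t := hmin ht
    have htq : θ t ≤ θ q := hmax ht
    rw [abs_lt]
    constructor <;> linarith
  have hdisp := h.displacement_nonneg_of_abs_sub_le (hs.1.trans hs.2)
    fun t ht ↦ (hnear t ht).le
  have hcos : 0 < cos (θ s - c) := cos_pos_of_mem_Ioo (abs_lt.1 (hnear s hs))
  have hcomp : (z b - z a).re * cos c + (z b - z a).im * sin c = -(d * cos (θ s - c)) := by
    rw [hz, Complex.neg_re, Complex.neg_im, Complex.re_ofReal_mul, Complex.im_ofReal_mul,
      Complex.exp_ofReal_mul_I_re, Complex.exp_ofReal_mul_I_im, cos_sub]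
    ring
  linarith [mul_pos hd hcos]

theorem add_two_pi_le_of_cos_eq_one (h : IsHeading θ z a b) (hs : s ∈ Icc a b)
    (hθs : cos (θ s) = 1) (hθa : cos (θ a) = -1) (hθb : cos (θ b) = -1) :
    (z b - z a).re + 2 * π ≤ b - a := by
  have hab : a ≤ b := hs.1.trans hs.2
  have hsin : ∀ {x}, cos x = 1 ∨ cos x = -1 → sin x = 0 := sin_eq_zero_iff_cos_eq.2
  have has := h.dist_sub_sin_le (left_mem_Icc.2 hab) hs hs.1
  have hsb := h.dist_sub_sin_le hs (right_mem_Icc.2 hab) hs.2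
  rw [hsin (.inl hθs), hsin (.inr hθa), sub_zero, sub_zero, dist_eq] at has
  rw [hsin (.inl hθs), hsin (.inr hθb), sub_zero, sub_zero, dist_comm, dist_eq] at hsb
  have hturn_a := pi_le_abs_sub_of_cos_eq hθs hθa
  have hturn_b := pi_le_abs_sub_of_cos_eq hθs hθb
  rw [Complex.sub_re]
  linarith

theorem add_two_pi_le_of_mem_Ioo (h : IsHeading θ z a b)
    (hθ : ∀ t ∈ Icc a b, θ t ∈ Ioo 0 (2 * π)) (hd : 0 < d) (hab : a ≤ b)
    (hθa : θ a = π) (hθb : θ b = π) (hz : z b - z a = d) : d + 2 * π ≤ b - a := by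
  obtain ⟨p, hp, q, hq, hpq⟩ : ∃ p ∈ Icc a b, ∃ q ∈ Icc a b, π ≤ θ q - θ p :=
    h.exists_pi_le_sub hd (left_mem_Icc.2 hab) (by simp [hθa, hz])
  have hsinp : 0 ≤ sin (θ p) :=
    sin_nonneg_of_nonneg_of_le_pi (hθ p hp).1.le (by linarith [(hθ q hq).2])
  have hsinq : sin (θ q) ≤ 0 := by
    rw [← sin_sub_two_pi]
    exact sin_nonpos_of_nonpos_of_neg_pi_le (by linarith [(hθ q hq).2])
      (by linarith [(hθ p hp).1])
  have hclosed : 2 * dist (θ q - sin (θ q)) (θ p - sin (θ p)) ≤ (b - (z b).re) - (a - (z a).re) :=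
    two_mul_dist_le_sub_of_endpoints_eq (f := fun t ↦ θ t - sin (θ t)) (L := fun t ↦ t - (z t).re)
      (fun s hs t ht hst ↦ h.dist_sub_sin_le hs ht hst) (by simp only [hθa, hθb]) hq hp
  have hgap : π ≤ dist (θ q - sin (θ q)) (θ p - sin (θ p)) := by
    rw [dist_eq]
    exact le_abs.2 (.inl (by linarith))
  have hre : (z b).re - (z a).re = d := by rw [← Complex.sub_re, hz, Complex.ofReal_re]
  linarith

theorem add_two_pi_le (h : IsHeading θ z a b) (hd : 0 < d) (hab : a ≤ b) (hθa : θ a = π)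
    (hθb : cos (θ b) = -1) (hz : z b - z a = d) : d + 2 * π ≤ b - a := by
  by_cases hone : ∃ s ∈ Icc a b, cos (θ s) = 1
  · obtain ⟨s, hs, hθs⟩ := hone
    simpa [hz] using h.add_two_pi_le_of_cos_eq_one hs hθs (by rw [hθa, cos_pi]) hθb
  · push Not at hone
    have hθ : ∀ t ∈ Icc a b, θ t ∈ Ioo 0 (2 * π) := fun t ht ↦
      mem_Ioo_zero_two_pi_of_cos_ne_one isPreconnected_Icc h.lipschitzOnWith.continuousOn hone
        (left_mem_Icc.2 hab) (by rw [hθa]; constructor <;> linarith [pi_pos]) ht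
    exact h.add_two_pi_le_of_mem_Ioo hθ hd hab hθa
      (eq_pi_of_cos_eq_neg_one (hθ b (right_mem_Icc.2 hab)) hθb) hz

end IsHeading

theorem IsBCPath.exists_isHeading {T x₀ y₀ α x₁ y₁ β : ℝ} {γ : ℝ → EuclideanSpace ℝ (Fin 2)}
    (hγ : IsBCPath T x₀ y₀ α x₁ y₁ β γ) :
    ∃ (θ : ℝ → ℝ) (z : ℝ → ℂ), IsHeading θ z 0 T ∧ θ 0 = α ∧
      Complex.exp (θ T * Complex.I) = Complex.exp (β * Complex.I) ∧
      z 0 = x₀ + y₀ * Complex.I ∧ z T = x₁ + y₁ * Complex.I := by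
  obtain ⟨hT, γ', hderiv, hcont, hnorm, hlip, hγ0, hγ'0, hγT, hγ'T⟩ := hγ
  let e : EuclideanSpace ℝ (Fin 2) ≃ₗᵢ[ℝ] ℂ := Complex.orthonormalBasisOneI.repr.symm
  have he (v : EuclideanSpace ℝ (Fin 2)) (x y : ℝ) (hv : v.ofLp = ![x, y]) :
      e v = x + y * Complex.I := by
    simp [e, hv]
  have he_exp (v : EuclideanSpace ℝ (Fin 2)) (φ : ℝ) (hv : v.ofLp = ![cos φ, sin φ]) :
      e v = Complex.exp (φ * Complex.I) := by
    rw [he v _ _ hv, Complex.exp_mul_I, Complex.ofReal_cos, Complex.ofReal_sin]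
  obtain ⟨θ, hθ, hθ0, hexp⟩ := exists_continuous_angle (u := e ∘ γ') hT
    (e.continuous.comp_continuousOn hcont)
    (fun t ht ↦ (e.norm_map _).trans (hnorm t ht)) (he_exp _ _ hγ'0).symm
  have hθlip : LipschitzOnWith 1 θ (Icc 0 T) := by
    refine lipschitzOnWith_of_exp_mul_I hθ.continuousOn fun s hs t ht ↦ ?_
    simp only [hexp s hs, hexp t ht]
    exact (e.isometry.edist_eq _ _).trans_le (hlip hs ht)
  refine ⟨θ, e ∘ γ, ⟨hθlip, fun t ht ↦ ?_⟩, hθ0, ?_, he _ _ _ hγ0, he _ _ _ hγT⟩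
  · rw [hexp t ht]
    exact e.toContinuousLinearEquiv.hasFDerivAt.comp_hasDerivWithinAt t (hderiv t ht)
  · rw [hexp T (right_mem_Icc.2 hT)]
    exact he_exp _ _ hγ'T

/-- For `d > 0`, every bounded-curvature path from
`(0, 0, π)` to `(d, 0, π)` has length at least `d + 2π`. -/
theorem reversing_lower_bound (d : ℝ) (hd : 0 < d) (T : ℝ)
    (γ : ℝ → EuclideanSpace ℝ (Fin 2)) (hγ : IsBCPath T 0 0 π d 0 π γ) :
    d + 2 * π ≤ T := by
  obtain ⟨θ, z, hθ, hθ0, hθT, hz0, hzT⟩ := hγ.exists_isHeading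
  have hcosT : cos (θ T) = -1 := by
    rw [← Complex.exp_ofReal_mul_I_re, hθT, Complex.exp_ofReal_mul_I_re, cos_pi]
  have hdisp : z T - z 0 = d := by simp [hz0, hzT]
  simpa using hθ.add_two_pi_le hd hγ.1 hθ0 hcosT hdisp
end

section
/- Let d ≥ 2 and let α, β be arbitrary real angles. Then there exists a bounded-curvature path from configuration (0,0,α) to (d,0,β) of length at most d + 2π. Combined with the fact that every bounded-curvature path from (0,0,π) to (d,0,π) has length at least d + 2π, this shows that for d ≥ 2 the supremum over all (α,β) of the infimum of lengths of bounded-curvature paths from (0,0,α) to (d,0,β), minus d, equals 2π. -/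
open Real

/-!
For the lower bound, the velocity is a `1`-Lipschitz curve in the unit sphere, so its angle to any
fixed velocity grows at most at unit rate. If a path starts and ends heading backwards, then its
first and last pieces of duration at most `π` make no forward progress, hence a path shorter than
`2π` makes none at all, and a longer one advances at most `T - 2π`.

For the upper bound, reflection, reversal and reduction modulo `2π` bring the headings to `-a` and
`b` with `a, b ≥ 0`, `a + b ≤ 2π` and `cos b ≤ cos a`. Turning left, driving straight and turning
left again is short enough unless the first left turn would have to overshoot. In that case
right–straight–left works if its two circles have disjoint interiors, its length being controlled
by the convexity of `tan`. If they overlap, then `a + b < π`, and one uses right–left–right when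
`a + b ≥ π - 2` and left–straight–right when `a + b < π - 2`.
-/

/-! ### Motions with prescribed headings -/

/-- The unit vector with heading `θ`. -/
noncomputable def headingVec (θ : ℝ) : EuclideanSpace ℝ (Fin 2) := !₂[cos θ, sin θ]

lemma norm_headingVec (θ : ℝ) : ‖headingVec θ‖ = 1 := by
  simp [headingVec, EuclideanSpace.norm_eq, Fin.sum_univ_two]

lemma lipschitzWith_headingVec : LipschitzWith 1 headingVec := by
  refine LipschitzWith.of_dist_le_mul fun s t => ?_
  have hchord : (cos s - cos t) ^ 2 + (sin s - sin t) ^ 2 = 2 - 2 * cos (s - t) := by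
    rw [cos_sub]
    linear_combination sin_sq_add_cos_sq s + sin_sq_add_cos_sq t
  rw [NNReal.coe_one, one_mul, EuclideanSpace.dist_eq, sqrt_le_left dist_nonneg]
  simp only [headingVec, Fin.sum_univ_two, Real.dist_eq, sq_abs, PiLp.toLp_apply,
    Matrix.cons_val_zero, Matrix.cons_val_one]
  linarith [one_sub_sq_div_two_le_cos (x := s - t)]

lemma lipschitzWith_one_comp_min_add_comp_max {E : Type*} [SeminormedAddCommGroup E]
    {f g : ℝ → E} (hf : LipschitzWith 1 f) (hg : LipschitzWith 1 g) (c : ℝ) :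
    LipschitzWith 1 fun t => f (min t c) + g (max (t - c) 0) := by
  refine LipschitzWith.of_dist_le_mul fun s t => ?_
  wlog hst : s ≤ t generalizing s t
  · rw [dist_comm, dist_comm s t]
    exact this t s (le_of_not_ge hst)
  have min_add_max (x : ℝ) : min x c + max (x - c) 0 = x := by
    rcases le_total x c with h | h
    · rw [min_eq_left h, max_eq_right (by linarith), add_zero]
    · rw [min_eq_right h, max_eq_left (by linarith), add_sub_cancel]
  calc dist (f (min s c) + g (max (s - c) 0)) (f (min t c) + g (max (t - c) 0))
      ≤ dist (f (min s c)) (f (min t c)) + dist (g (max (s - c) 0)) (g (max (t - c) 0)) :=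
        dist_add_add_le _ _ _ _
    _ ≤ dist (min s c) (min t c) + dist (max (s - c) 0) (max (t - c) 0) := by
        gcongr
        · simpa using hf.dist_le_mul (min s c) (min t c)
        · simpa using hg.dist_le_mul (max (s - c) 0) (max (t - c) 0)
    _ = (min t c - min s c) + (max (t - c) 0 - max (s - c) 0) := by
        rw [dist_comm, Real.dist_eq, abs_of_nonneg (sub_nonneg.2 (by gcongr)),
          dist_comm, Real.dist_eq, abs_of_nonneg (sub_nonneg.2 (by gcongr))]
    _ = (1 : NNReal) * dist s t := by
        rw [dist_comm s, Real.dist_eq, abs_of_nonneg (sub_nonneg.2 hst), NNReal.coe_one]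
        linarith [min_add_max s, min_add_max t]

/-- A unit-speed motion of duration `T` whose heading varies `1`-Lipschitz from `α` to `β` can
produce the displacement `(x, y)`. Headings are real numbers, not angles modulo `2π`, so that the
amount of turning is visible. -/
def Steerable (T α β x y : ℝ) : Prop :=
  0 ≤ T ∧ ∃ φ : ℝ → ℝ, LipschitzWith 1 φ ∧ φ 0 = α ∧ φ T = β ∧
    ∫ t in (0 : ℝ)..T, cos (φ t) = x ∧ ∫ t in (0 : ℝ)..T, sin (φ t) = y

namespace Steerable

variable {T T₁ T₂ α β δ x y x₁ y₁ x₂ y₂ : ℝ}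

lemma reflect (h : Steerable T α β x y) : Steerable T (-α) (-β) x (-y) := by
  obtain ⟨hT, φ, hφ, rfl, rfl, rfl, rfl⟩ := h
  exact ⟨hT, fun t => -φ t, hφ.neg, rfl, rfl, by simp, by simp⟩

lemma reverse (h : Steerable T α β x y) : Steerable T β α x y := by
  obtain ⟨hT, φ, hφ, rfl, rfl, rfl, rfl⟩ := h
  refine ⟨hT, fun t => φ (T - t), LipschitzWith.of_dist_le_mul fun s t => ?_, by simp, by simp,
    ?_, ?_⟩
  · simpa only [dist_sub_left] using hφ.dist_le_mul (T - s) (T - t)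
  · simp [intervalIntegral.integral_comp_sub_left (fun t => cos (φ t))]
  · simp [intervalIntegral.integral_comp_sub_left (fun t => sin (φ t))]

lemma trans (h₁ : Steerable T₁ α β x₁ y₁) (h₂ : Steerable T₂ β δ x₂ y₂) :
    Steerable (T₁ + T₂) α δ (x₁ + x₂) (y₁ + y₂) := by
  obtain ⟨hT₁, φ, hφ, rfl, rfl, rfl, rfl⟩ := h₁
  obtain ⟨hT₂, ψ, hψ, hψ₀, rfl, rfl, rfl⟩ := h₂
  let χ : ℝ → ℝ := fun t => φ (min t T₁) + (ψ (max (t - T₁) 0) - φ T₁)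
  have hχ : LipschitzWith 1 χ :=
    lipschitzWith_one_comp_min_add_comp_max hφ (by simpa using hψ.sub (.const (φ T₁))) T₁
  have χ_of_le {t : ℝ} (ht : t ≤ T₁) : χ t = φ t := by
    simp only [χ, min_eq_left ht, max_eq_right (sub_nonpos.2 ht), hψ₀, sub_self, add_zero]
  have χ_of_ge {t : ℝ} (ht : T₁ ≤ t) : χ t = ψ (t - T₁) := by
    simp only [χ, min_eq_right ht, max_eq_left (sub_nonneg.2 ht), add_sub_cancel]
  have integral_χ {f : ℝ → ℝ} (hf : Continuous f) : ∫ t in (0 : ℝ)..T₁ + T₂, f (χ t) =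
      (∫ t in (0 : ℝ)..T₁, f (φ t)) + ∫ t in (0 : ℝ)..T₂, f (ψ t) := by
    have hfχ : Continuous fun t => f (χ t) := hf.comp hχ.continuous
    rw [← intervalIntegral.integral_add_adjacent_intervals (hfχ.intervalIntegrable 0 T₁)
      (hfχ.intervalIntegrable T₁ (T₁ + T₂))]
    congr 1
    · refine intervalIntegral.integral_congr fun t ht => ?_
      rw [Set.uIcc_of_le hT₁] at ht
      simp only [χ_of_le ht.2]
    · have hshift := intervalIntegral.integral_comp_sub_right (a := T₁) (b := T₁ + T₂)
        (fun t => f (ψ t)) T₁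
      rw [sub_self, add_sub_cancel_left] at hshift
      rw [← hshift]
      refine intervalIntegral.integral_congr fun t ht => ?_
      rw [Set.uIcc_of_le (by linarith)] at ht
      simp only [χ_of_ge ht.1]
  exact ⟨by linarith, χ, hχ, χ_of_le hT₁, by rw [χ_of_ge (by linarith), add_sub_cancel_left],
    integral_χ continuous_cos, integral_χ continuous_sin⟩

lemma left (h : α ≤ β) : Steerable (β - α) α β (sin β - sin α) (cos α - cos β) := by
  refine ⟨sub_nonneg.2 h, fun t => t + α, .of_dist_le_mul fun s t => by simp, by simp, by simp,
    ?_, ?_⟩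
  · simp [intervalIntegral.integral_comp_add_right (fun t => cos t)]
  · simp [intervalIntegral.integral_comp_add_right (fun t => sin t)]

lemma right (h : β ≤ α) : Steerable (α - β) α β (sin α - sin β) (cos β - cos α) :=
  (left h).reverse

lemma straight {l : ℝ} (hl : 0 ≤ l) (α : ℝ) : Steerable l α α (l * cos α) (l * sin α) :=
  ⟨hl, fun _ => α, .const' α, rfl, rfl, by simp, by simp⟩

lemma exists_isBCPath (h : Steerable T α β x y) : ∃ γ, IsBCPath T 0 0 α x y β γ := by
  obtain ⟨hT, φ, hφ, rfl, rfl, rfl, rfl⟩ := h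
  let γ : ℝ → EuclideanSpace ℝ (Fin 2) := fun t =>
    !₂[∫ s in (0 : ℝ)..t, cos (φ s), ∫ s in (0 : ℝ)..t, sin (φ s)]
  have hasDerivAt_γ (t : ℝ) : HasDerivAt γ (headingVec (φ t)) t := by
    refine (PiLp.continuousLinearEquiv 2 ℝ fun _ : Fin 2 => ℝ).symm.hasFDerivAt.comp_hasDerivAt t
      (hasDerivAt_pi.2 fun i => ?_)
    fin_cases i
    · exact (continuous_cos.comp hφ.continuous).integral_hasStrictDerivAt 0 t |>.hasDerivAt
    · exact (continuous_sin.comp hφ.continuous).integral_hasStrictDerivAt 0 t |>.hasDerivAt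
  have hlip : LipschitzWith 1 (headingVec ∘ φ) := by
    simpa using lipschitzWith_headingVec.comp hφ
  refine ⟨γ, hT, headingVec ∘ φ, fun t _ => (hasDerivAt_γ t).hasDerivWithinAt,
    hlip.continuous.continuousOn, fun t _ => norm_headingVec _, hlip.lipschitzOnWith, ?_, rfl,
    rfl, rfl⟩
  simp [γ]

end Steerable

/-! ### Progress of paths with backward ends -/

lemma sub_le_sub_of_forall_sub_le_add_cube {f : ℝ → ℝ} {a b : ℝ} (hab : a ≤ b)
    (hf : ∀ s ∈ Set.Icc a b, ∀ t ∈ Set.Icc a b, s ≤ t → f t - f s ≤ (t - s) + (t - s) ^ 3) :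
    f b - f a ≤ b - a := by
  have partition_bound (n : ℕ) : f b - f a ≤ (b - a) + (b - a) ^ 3 * (1 / ((n : ℝ) + 1)) ^ 2 := by
    set h := (b - a) * (1 / ((n : ℝ) + 1)) with hh
    have hh₀ : 0 ≤ h := mul_nonneg (sub_nonneg.2 hab) (by positivity)
    have hnh : ((n : ℝ) + 1) * h = b - a := by rw [hh]; field_simp
    have mem_Icc {i : ℕ} (hi : i ≤ n + 1) : a + i * h ∈ Set.Icc a b := by
      have hi' : (i : ℝ) * h ≤ (n + 1) * h := by gcongr; exact_mod_cast hi
      exact ⟨by linarith [mul_nonneg i.cast_nonneg hh₀], by linarith⟩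
    calc f b - f a
        = ∑ i ∈ Finset.range (n + 1), (f (a + (i + 1 : ℕ) * h) - f (a + i * h)) := by
          rw [Finset.sum_range_sub fun i : ℕ => f (a + i * h)]
          push_cast
          rw [hnh, zero_mul, add_zero, add_sub_cancel]
      _ ≤ ∑ _i ∈ Finset.range (n + 1), (h + h ^ 3) := by
          refine Finset.sum_le_sum fun i hi => ?_
          have hi := Finset.mem_range.1 hi
          have hstep : a + (i + 1 : ℕ) * h - (a + i * h) = h := by push_cast; ring
          have := hf _ (mem_Icc hi.le) _ (mem_Icc hi) (by linarith)
          rwa [hstep] at this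
      _ = (b - a) + (b - a) ^ 3 * (1 / ((n : ℝ) + 1)) ^ 2 := by
          rw [Finset.sum_const, Finset.card_range, nsmul_eq_mul, hh]
          push_cast
          field_simp
  refine ge_of_tendsto' (x := Filter.atTop) ?_ partition_bound
  simpa using ((tendsto_one_div_add_atTop_nhds_zero_nat (𝕜 := ℝ)).pow 2).const_mul ((b - a) ^ 3)
    |>.const_add (b - a)

lemma sub_le_sub_of_hasDerivWithinAt_le {f g f' g' : ℝ → ℝ} {a b : ℝ} (hab : a ≤ b)
    (hf : ∀ t ∈ Set.Icc a b, HasDerivWithinAt f (f' t) (Set.Icc a b) t)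
    (hg : ∀ t ∈ Set.Icc a b, HasDerivWithinAt g (g' t) (Set.Icc a b) t)
    (hle : ∀ t ∈ Set.Icc a b, f' t ≤ g' t) : f b - f a ≤ g b - g a := by
  have hmono : MonotoneOn (g - f) (Set.Icc a b) :=
    monotoneOn_of_hasDerivWithinAt_nonneg (convex_Icc a b)
      (fun t ht => ((hg t ht).sub (hf t ht)).continuousWithinAt)
      (fun t ht => ((hg t (interior_subset ht)).sub (hf t (interior_subset ht))).mono
        interior_subset)
      (fun t ht => sub_nonneg.2 (hle t (interior_subset ht)))
  have := hmono (Set.left_mem_Icc.2 hab) (Set.right_mem_Icc.2 hab) hab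
  simp only [Pi.sub_apply] at this
  linarith

section InnerProductSpace

open InnerProductGeometry
open scoped RealInnerProductSpace

variable {V : Type*} [NormedAddCommGroup V] [InnerProductSpace ℝ V]

lemma cos_angle_of_norm_eq_one {x y : V} (hx : ‖x‖ = 1) (hy : ‖y‖ = 1) :
    cos (angle x y) = ⟪x, y⟫ := by
  rw [cos_angle, hx, hy, one_mul, div_one]

lemma norm_sub_eq_two_mul_sin_half_angle {x y : V} (hx : ‖x‖ = 1) (hy : ‖y‖ = 1) :
    ‖x - y‖ = 2 * sin (angle x y / 2) := by
  have hsin : 0 ≤ sin (angle x y / 2) := sin_nonneg_of_nonneg_of_le_pi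
    (by linarith [angle_nonneg x y]) (by linarith [angle_nonneg x y, angle_le_pi x y])
  rw [← sq_eq_sq₀ (norm_nonneg _) (by positivity), norm_sub_sq_real, hx, hy,
    ← cos_angle_of_norm_eq_one hx hy, mul_pow, sin_sq_eq_half_sub]
  ring_nf

lemma angle_le_norm_sub_add_cube {x y : V} (hx : ‖x‖ = 1) (hy : ‖y‖ = 1) :
    angle x y ≤ ‖x - y‖ + ‖x - y‖ ^ 3 := by
  have hA := angle_nonneg x y
  have hchord := norm_sub_eq_two_mul_sin_half_angle hx hy
  have hcubic := sin_ge_sub_cube (x := angle x y / 2) (by linarith)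
  have hlinear : angle x y ≤ 2 * ‖x - y‖ := by
    have := mul_le_sin (x := angle x y / 2) (by linarith) (by linarith [angle_le_pi x y])
    have hπ : 1 / 2 ≤ 2 / π := by
      rw [div_le_div_iff₀ two_pos pi_pos]
      linarith [pi_le_four]
    nlinarith
  have hcube : angle x y ^ 3 ≤ (2 * ‖x - y‖) ^ 3 := by gcongr
  nlinarith [pow_nonneg (norm_nonneg (x - y)) 3]

variable {γ u : ℝ → V} {e : V} {T s t : ℝ}

lemma angle_le_sub_of_lipschitzOnWith (hu : ∀ r ∈ Set.Icc s t, ‖u r‖ = 1)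
    (hL : LipschitzOnWith 1 u (Set.Icc s t)) (hst : s ≤ t) : angle (u s) (u t) ≤ t - s := by
  have hs : s ∈ Set.Icc s t := Set.left_mem_Icc.2 hst
  have hself : angle (u s) (u s) = 0 := angle_self (norm_ne_zero_iff.1 (by simp [hu s hs]))
  have := sub_le_sub_of_forall_sub_le_add_cube (f := fun r => angle (u s) (u r)) hst
    fun p hp q hq hpq => by
      have hdist : ‖u p - u q‖ ≤ q - p := by
        have := hL.dist_le_mul p hp q hq
        rwa [dist_eq_norm, dist_comm, Real.dist_eq, abs_of_nonneg (sub_nonneg.2 hpq),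
          NNReal.coe_one, one_mul] at this
      calc angle (u s) (u q) - angle (u s) (u p) ≤ angle (u p) (u q) := by
            linarith [angle_le_angle_add_angle (u s) (u p) (u q)]
        _ ≤ ‖u p - u q‖ + ‖u p - u q‖ ^ 3 := angle_le_norm_sub_add_cube (hu p hp) (hu q hq)
        _ ≤ (q - p) + (q - p) ^ 3 := by gcongr
  simpa only [hself, sub_zero] using this

lemma cos_sub_le_inner_of_lipschitzOnWith (hu : ∀ r ∈ Set.Icc s t, ‖u r‖ = 1)
    (hL : LipschitzOnWith 1 u (Set.Icc s t)) (hst : s ≤ t) (hπ : t - s ≤ π) :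
    cos (t - s) ≤ ⟪u s, u t⟫ := by
  rw [← cos_angle_of_norm_eq_one (hu s (Set.left_mem_Icc.2 hst)) (hu t (Set.right_mem_Icc.2 hst))]
  exact cos_le_cos_of_nonneg_of_le_pi (angle_nonneg _ _) hπ
    (angle_le_sub_of_lipschitzOnWith hu hL hst)

lemma inner_sub_le_of_forall_inner_deriv_le {g g' : ℝ → ℝ}
    (hγ : ∀ r ∈ Set.Icc s t, HasDerivWithinAt γ (u r) (Set.Icc s t) r)
    (hg : ∀ r, HasDerivAt g (g' r) r) (hst : s ≤ t)
    (hle : ∀ r ∈ Set.Icc s t, ⟪e, u r⟫ ≤ g' r) : ⟪e, γ t - γ s⟫ ≤ g t - g s := by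
  rw [inner_sub_right]
  exact sub_le_sub_of_hasDerivWithinAt_le (f := fun r => ⟪e, γ r⟫) hst
    (fun r hr => (innerSL ℝ e).hasFDerivAt.comp_hasDerivWithinAt r (hγ r hr))
    (fun r _ => (hg r).hasDerivWithinAt) hle

lemma inner_sub_le_sub_of_norm_eq_one
    (hγ : ∀ r ∈ Set.Icc s t, HasDerivWithinAt γ (u r) (Set.Icc s t) r)
    (hu : ∀ r ∈ Set.Icc s t, ‖u r‖ = 1) (he : ‖e‖ = 1) (hst : s ≤ t) :
    ⟪e, γ t - γ s⟫ ≤ t - s :=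
  inner_sub_le_of_forall_inner_deriv_le hγ hasDerivAt_id hst fun r hr => by
    simpa [he, hu r hr] using real_inner_le_norm e (u r)

lemma inner_sub_le_neg_sin_of_left_eq_neg
    (hγ : ∀ r ∈ Set.Icc s t, HasDerivWithinAt γ (u r) (Set.Icc s t) r)
    (hu : ∀ r ∈ Set.Icc s t, ‖u r‖ = 1) (hL : LipschitzOnWith 1 u (Set.Icc s t))
    (hst : s ≤ t) (hπ : t - s ≤ π) (he : u s = -e) : ⟪e, γ t - γ s⟫ ≤ -sin (t - s) := by
  have hg (r : ℝ) : HasDerivAt (fun r => -sin (r - s)) (-cos (r - s)) r := by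
    simpa using ((hasDerivAt_id r).sub_const s).sin.fun_neg
  have := inner_sub_le_of_forall_inner_deriv_le hγ hg hst fun r hr => by
    have hsub : Set.Icc s r ⊆ Set.Icc s t := Set.Icc_subset_Icc_right hr.2
    have := cos_sub_le_inner_of_lipschitzOnWith (fun q hq => hu q (hsub hq)) (hL.mono hsub) hr.1
      (by linarith [hr.2])
    rw [he, inner_neg_left] at this
    linarith
  simpa using this

lemma inner_sub_le_neg_sin_of_right_eq_neg
    (hγ : ∀ r ∈ Set.Icc s t, HasDerivWithinAt γ (u r) (Set.Icc s t) r)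
    (hu : ∀ r ∈ Set.Icc s t, ‖u r‖ = 1) (hL : LipschitzOnWith 1 u (Set.Icc s t))
    (hst : s ≤ t) (hπ : t - s ≤ π) (he : u t = -e) : ⟪e, γ t - γ s⟫ ≤ -sin (t - s) := by
  have hg (r : ℝ) : HasDerivAt (fun r => sin (t - r)) (-cos (t - r)) r := by
    simpa using ((hasDerivAt_id r).const_sub t).sin
  have := inner_sub_le_of_forall_inner_deriv_le hγ hg hst fun r hr => by
    have hsub : Set.Icc r t ⊆ Set.Icc s t := Set.Icc_subset_Icc_left hr.1
    have := cos_sub_le_inner_of_lipschitzOnWith (fun q hq => hu q (hsub hq)) (hL.mono hsub) hr.2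
      (by linarith [hr.1])
    rw [he, inner_neg_right, real_inner_comm] at this
    linarith
  simpa using this

lemma inner_sub_add_two_pi_le_of_backward_ends
    (hγ : ∀ r ∈ Set.Icc 0 T, HasDerivWithinAt γ (u r) (Set.Icc 0 T) r)
    (hu : ∀ r ∈ Set.Icc 0 T, ‖u r‖ = 1) (hL : LipschitzOnWith 1 u (Set.Icc 0 T)) (hT : 0 ≤ T)
    (he₀ : u 0 = -e) (he₁ : u T = -e) (hpos : 0 < ⟪e, γ T - γ 0⟫) :
    ⟪e, γ T - γ 0⟫ + 2 * π ≤ T := by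
  have hγ' {p q : ℝ} (hp : 0 ≤ p) (hq : q ≤ T) :
      ∀ r ∈ Set.Icc p q, HasDerivWithinAt γ (u r) (Set.Icc p q) r := fun r hr =>
    (hγ r (Set.Icc_subset_Icc hp hq hr)).mono (Set.Icc_subset_Icc hp hq)
  have start_le {q : ℝ} (hq : 0 ≤ q) (hqT : q ≤ T) (hπ : q ≤ π) : ⟪e, γ q - γ 0⟫ ≤ -sin q := by
    have hsub : Set.Icc 0 q ⊆ Set.Icc 0 T := Set.Icc_subset_Icc_right hqT
    simpa using inner_sub_le_neg_sin_of_left_eq_neg (hγ' le_rfl hqT) (fun r hr => hu r (hsub hr))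
      (hL.mono hsub) hq (by simpa) he₀
  have end_le {p : ℝ} (hp : 0 ≤ p) (hpT : p ≤ T) (hπ : T - p ≤ π) :
      ⟪e, γ T - γ p⟫ ≤ -sin (T - p) := by
    have hsub : Set.Icc p T ⊆ Set.Icc 0 T := Set.Icc_subset_Icc_left hp
    exact inner_sub_le_neg_sin_of_right_eq_neg (hγ' hp le_rfl) (fun r hr => hu r (hsub hr))
      (hL.mono hsub) hpT hπ he₁
  have split (p q r : ℝ) : ⟪e, γ r - γ p⟫ = ⟪e, γ q - γ p⟫ + ⟪e, γ r - γ q⟫ := by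
    rw [← inner_add_right, add_comm, sub_add_sub_cancel]
  rcases lt_or_ge T (2 * π) with hshort | hlong
  · have h₁ := start_le (q := T / 2) (by linarith) (by linarith) (by linarith)
    have h₂ := end_le (p := T / 2) (by linarith) (by linarith) (by linarith)
    have hsin : 0 ≤ sin (T / 2) := sin_nonneg_of_nonneg_of_le_pi (by linarith) (by linarith)
    rw [sub_half] at h₂
    linarith [split 0 (T / 2) T]
  · have hπ := pi_pos
    have h₁ := start_le hπ.le (by linarith) le_rfl
    have h₂ := end_le (p := T - π) (by linarith) (by linarith) (by linarith)
    have hmid : ⟪e, γ (T - π) - γ π⟫ ≤ T - π - π := by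
      have hnorm : ‖e‖ = 1 := by rw [← norm_neg, ← he₀, hu 0 ⟨le_rfl, hT⟩]
      exact inner_sub_le_sub_of_norm_eq_one (hγ' hπ.le (by linarith))
        (fun r hr => hu r ⟨by linarith [hr.1], by linarith [hr.2]⟩) hnorm (by linarith)
    rw [sin_pi] at h₁
    rw [sub_sub_cancel, sin_pi] at h₂
    linarith [split 0 π T, split π (T - π) T]

end InnerProductSpace

lemma IsBCPath.add_two_pi_le {d T : ℝ} {γ : ℝ → EuclideanSpace ℝ (Fin 2)} (hd : 0 < d)
    (h : IsBCPath T 0 0 π d 0 π γ) : d + 2 * π ≤ T := by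
  obtain ⟨hT, u, hγ, -, hu, hL, hγ₀, hu₀, hγ₁, hu₁⟩ := h
  have eq_neg {t : ℝ} (ht : u t = ![cos π, sin π]) : u t = -headingVec 0 := by
    ext i
    fin_cases i <;> simp [ht, headingVec]
  have hdisp : inner ℝ (headingVec 0) (γ T - γ 0) = d := by
    simp [headingVec, PiLp.inner_apply, hγ₀, hγ₁]
  rw [← hdisp] at hd ⊢
  exact inner_sub_add_two_pi_le_of_backward_ends hγ hu hL hT (eq_neg hu₀) (eq_neg hu₁) hd

/-! ### Inner tangents of unit circles -/

lemma exists_polar_of_nonneg {x y : ℝ} (hx : 0 ≤ x) (hy : 0 ≤ y) :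
    ∃ r τ : ℝ, 0 ≤ r ∧ 0 ≤ τ ∧ τ ≤ π / 2 ∧ x = r * cos τ ∧ y = r * sin τ :=
  ⟨‖(⟨x, y⟩ : ℂ)‖, Complex.arg ⟨x, y⟩, norm_nonneg _, Complex.arg_nonneg_iff.2 hy,
    (abs_le.1 (Complex.abs_arg_le_pi_div_two_iff.2 hx)).2, (Complex.norm_mul_cos_arg ⟨x, y⟩).symm,
    (Complex.norm_mul_sin_arg ⟨x, y⟩).symm⟩

lemma sq_eq_of_polar {x y r τ : ℝ} (hx : x = r * cos τ) (hy : y = r * sin τ) :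
    r ^ 2 = x ^ 2 + y ^ 2 := by
  rw [hx, hy]
  linear_combination -r ^ 2 * sin_sq_add_cos_sq τ

lemma tan_half_mul_sin {θ : ℝ} (hθ : cos (θ / 2) ≠ 0) : tan (θ / 2) * sin θ = 1 - cos θ := by
  obtain ⟨v, rfl⟩ : ∃ v, θ = 2 * v := ⟨θ / 2, by ring⟩
  rw [mul_div_cancel_left₀ v two_ne_zero] at hθ ⊢
  rw [sin_two_mul, cos_two_mul]
  linear_combination 2 * sin v * tan_mul_cos hθ + 2 * sin_sq_add_cos_sq v

lemma tan_half_mul_one_add_cos {θ : ℝ} (hθ : cos (θ / 2) ≠ 0) :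
    tan (θ / 2) * (1 + cos θ) = sin θ := by
  obtain ⟨v, rfl⟩ : ∃ v, θ = 2 * v := ⟨θ / 2, by ring⟩
  rw [mul_div_cancel_left₀ v two_ne_zero] at hθ ⊢
  rw [sin_two_mul, cos_two_mul]
  linear_combination 2 * cos v * tan_mul_cos hθ

lemma mul_cos_le_sin {z : ℝ} (hz₀ : 0 ≤ z) (hz : z < π / 2) : z * cos z ≤ sin z := by
  have hcos : 0 < cos z := cos_pos_of_mem_Ioo ⟨by linarith, hz⟩
  rw [← le_div_iff₀ hcos, ← tan_eq_sin_div_cos]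
  exact le_tan hz₀ hz

-- For `u < π / 2` this says that the graph of `tan` lies above its tangent line at `u`.
lemma cos_mul_sin_sub_le {u v : ℝ} (hu : 0 ≤ u) (hv₀ : 0 ≤ v) (hv : v < π / 2) :
    cos u * sin (u - v) ≤ (u - v) * cos v := by
  have hcosv : 0 < cos v := cos_pos_of_mem_Ioo ⟨by linarith, hv⟩
  have hsinv : 0 ≤ sin v := sin_nonneg_of_nonneg_of_le_pi hv₀ (by linarith)
  rcases le_total v u with h | h
  · obtain ⟨w, rfl⟩ : ∃ w, u = v + w := ⟨u - v, by ring⟩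
    have hdouble : sin w * cos w ≤ w := by
      have := sin_le (x := 2 * w) (by linarith)
      rw [sin_two_mul] at this
      linarith
    rw [add_sub_cancel_left, cos_add]
    linarith [mul_le_mul_of_nonneg_right hdouble hcosv.le, mul_nonneg hsinv (sq_nonneg (sin w))]
  · obtain ⟨z, rfl⟩ : ∃ z, u = v - z := ⟨v - u, by ring⟩
    have hcosz : 0 < cos z := cos_pos_of_mem_Ioo ⟨by linarith, by linarith⟩
    have hsin : 0 ≤ sin (v - z) := sin_nonneg_of_nonneg_of_le_pi hu (by linarith)
    have htan : z * cos z ≤ sin z := mul_cos_le_sin (by linarith) (by linarith)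
    have hfactor : cos z * ((v - z - v) * cos v - cos (v - z) * sin (v - z - v)) =
        sin z ^ 2 * sin (v - z) + cos v * (sin z - z * cos z) := by
      rw [sub_sub_cancel_left, sin_neg, cos_sub, sin_sub]
      linear_combination cos v * sin z * sin_sq_add_cos_sq z
    have hnonneg : 0 ≤ sin z ^ 2 * sin (v - z) + cos v * (sin z - z * cos z) :=
      add_nonneg (mul_nonneg (sq_nonneg _) hsin) (mul_nonneg hcosv.le (by linarith))
    exact sub_nonneg.1 (nonneg_of_mul_nonneg_right (hfactor ▸ hnonneg) hcosz)

lemma add_sin_le_add_tan_half_mul_one_add_cos {x θ : ℝ} (hx : 0 ≤ x) (hθ₀ : 0 ≤ θ) (hθ : θ < π) :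
    θ + sin x ≤ x + tan (θ / 2) * (1 + cos x) := by
  have hcos : 0 < cos (θ / 2) := cos_pos_of_mem_Ioo ⟨by linarith [pi_pos], by linarith⟩
  have hle := cos_mul_sin_sub_le (u := x / 2) (v := θ / 2) (by linarith) (by linarith) (by linarith)
  obtain ⟨u, rfl⟩ : ∃ u, x = 2 * u := ⟨x / 2, by ring⟩
  rw [mul_div_cancel_left₀ u two_ne_zero, sin_sub, ← tan_mul_cos hcos.ne'] at hle
  have hdiv : cos u * (sin u - cos u * tan (θ / 2)) ≤ u - θ / 2 :=
    le_of_mul_le_mul_right (by linarith) hcos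
  rw [sin_two_mul, cos_two_mul]
  linarith

/-- Two oppositely oriented unit circles, the second centred at `(X, Y)` from the centre of the
first, have an inner common tangent segment of length `l` which leaves the first circle, traversed
clockwise, at heading `-θ`. -/
def IsInnerTangent (X Y l θ : ℝ) : Prop :=
  X = l * cos θ + 2 * sin θ ∧ Y = 2 * cos θ - l * sin θ

lemma cos_arcsin_div_of_sq_add_sq_eq {p q ρ : ℝ} (hρ : 0 < ρ) (hq : 0 ≤ q)
    (hpq : p ^ 2 + q ^ 2 = ρ ^ 2) : cos (arcsin (p / ρ)) = q / ρ := by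
  have hsq : 1 - (p / ρ) ^ 2 = (q / ρ) ^ 2 := by
    field_simp
    linarith
  rw [cos_arcsin, hsq, sqrt_sq (by positivity)]

lemma exists_isInnerTangent {X Y : ℝ} (hX : 0 < X) (hY : Y ≤ 2) (h : 4 ≤ X ^ 2 + Y ^ 2) :
    ∃ l θ : ℝ, IsInnerTangent X Y l θ ∧ 0 ≤ l ∧ l ^ 2 = X ^ 2 + Y ^ 2 - 4 ∧ 0 ≤ θ ∧ θ < π ∧
      (0 ≤ Y → θ ≤ π / 2) := by
  set ρ := √(X ^ 2 + Y ^ 2)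
  set l := √(X ^ 2 + Y ^ 2 - 4)
  have hl : l ^ 2 = X ^ 2 + Y ^ 2 - 4 := sq_sqrt (by linarith)
  have hρ : ρ ^ 2 = X ^ 2 + Y ^ 2 := sq_sqrt (by linarith)
  have hρ₂ : 2 ≤ ρ := le_sqrt_of_sq_le (by linarith)
  have hρ₀ : 0 < ρ := by linarith
  have hYρ : |Y| < ρ := abs_lt_of_sq_lt_sq (by rw [hρ]; linarith [pow_pos hX 2]) hρ₀.le
  have hYρ' : |Y / ρ| < 1 := by rwa [abs_div, abs_of_pos hρ₀, div_lt_one hρ₀]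
  have h2ρ : 2 / ρ ≤ 1 := (div_le_one hρ₀).2 hρ₂
  have h2ρ₀ : 0 < 2 / ρ := by positivity
  have cosA : cos (arcsin (2 / ρ)) = l / ρ :=
    cos_arcsin_div_of_sq_add_sq_eq hρ₀ (sqrt_nonneg _) (by linarith)
  have cosB : cos (arcsin (Y / ρ)) = X / ρ :=
    cos_arcsin_div_of_sq_add_sq_eq hρ₀ hX.le (by linarith)
  have sinA : sin (arcsin (2 / ρ)) = 2 / ρ := sin_arcsin (by linarith) h2ρ
  have sinB : sin (arcsin (Y / ρ)) = Y / ρ :=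
    sin_arcsin (abs_lt.1 hYρ').1.le (abs_lt.1 hYρ').2.le
  refine ⟨l, arcsin (2 / ρ) - arcsin (Y / ρ), ⟨?_, ?_⟩, sqrt_nonneg _, hl, ?_, ?_, fun hY₀ => ?_⟩
  · rw [cos_sub, sin_sub, cosA, cosB, sinA, sinB]
    field_simp
    linear_combination X * (hρ - hl)
  · rw [cos_sub, sin_sub, cosA, cosB, sinA, sinB]
    field_simp
    linear_combination Y * (hρ - hl)
  · exact sub_nonneg.2 (monotone_arcsin (by gcongr))
  · linarith [arcsin_le_pi_div_two (2 / ρ), neg_pi_div_two_lt_arcsin.2 (abs_lt.1 hYρ').1]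
  · linarith [arcsin_le_pi_div_two (2 / ρ), arcsin_nonneg.2 (div_nonneg hY₀ hρ₀.le)]

namespace IsInnerTangent

variable {X Y l θ : ℝ}

lemma length_eq (h : IsInnerTangent X Y l θ) (hθ₀ : 0 ≤ θ) (hθ : θ < π) :
    l = X - tan (θ / 2) * (2 + Y) := by
  have hcos : 0 < cos (θ / 2) := cos_pos_of_mem_Ioo ⟨by linarith [pi_pos], by linarith⟩
  rw [h.1, h.2]
  linear_combination -l * tan_half_mul_sin hcos.ne' + 2 * tan_half_mul_one_add_cos hcos.ne'

lemma four_mul_tan_half_le (h : IsInnerTangent X Y l θ) (hl : 2 ≤ l) (hθ₀ : 0 ≤ θ)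
    (hθ : θ ≤ π / 2) : 4 * tan (θ / 2) ≤ 2 - Y := by
  have hcos : 0 < cos (θ / 2) := cos_pos_of_mem_Ioo ⟨by linarith [pi_pos], by linarith [pi_pos]⟩
  have htan : tan (θ / 2) ≤ 1 := by
    rw [← tan_pi_div_four]
    exact strictMonoOn_tan.monotoneOn ⟨by linarith [pi_pos], by linarith [pi_pos]⟩
      ⟨by linarith [pi_pos], by linarith [pi_pos]⟩ (by linarith)
  have hsin : 0 ≤ sin θ := sin_nonneg_of_nonneg_of_le_pi hθ₀ (by linarith [pi_pos])
  calc 4 * tan (θ / 2)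
      ≤ 4 * tan (θ / 2) + 2 * ((1 - tan (θ / 2)) * (1 - cos θ)) := by
        linarith [mul_nonneg (sub_nonneg.2 htan) (sub_nonneg.2 (cos_le_one θ))]
    _ = 2 * sin θ + 2 * (1 - cos θ) := by
        linear_combination 2 * tan_half_mul_one_add_cos hcos.ne'
    _ ≤ l * sin θ + 2 * (1 - cos θ) := by gcongr
    _ = 2 - Y := by rw [h.2]; ring

end IsInnerTangent

/-! ### Motions made of left turns (`l`), right turns (`r`) and straight segments (`s`) -/

/-- Some motion of duration at most `d + 2π` produces the displacement `(d, 0)` while its heading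
goes from `α` to `β`, both taken modulo `2π`. -/
def HasShortSteering (d : ℝ) (α β : Angle) : Prop :=
  ∃ T α' β' : ℝ, Steerable T α' β' d 0 ∧ T ≤ d + 2 * π ∧ (α' : Angle) = α ∧ (β' : Angle) = β

namespace HasShortSteering

variable {d : ℝ} {α β : Angle}

lemma swap (h : HasShortSteering d α β) : HasShortSteering d β α := by
  obtain ⟨T, α', β', hsteer, hT, hα, hβ⟩ := h
  exact ⟨T, β', α', hsteer.reverse, hT, hβ, hα⟩

lemma neg (h : HasShortSteering d α β) : HasShortSteering d (-α) (-β) := by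
  obtain ⟨T, α', β', hsteer, hT, rfl, rfl⟩ := h
  exact ⟨T, -α', -β', neg_zero (G := ℝ) ▸ hsteer.reflect, hT, rfl, rfl⟩

lemma exists_isBCPath {α β : ℝ} (h : HasShortSteering d α β) :
    ∃ T γ, IsBCPath T 0 0 α d 0 β γ ∧ T ≤ d + 2 * π := by
  obtain ⟨T, α', β', hsteer, hT, hα, hβ⟩ := h
  obtain ⟨γ, hγ⟩ := hsteer.exists_isBCPath
  refine ⟨T, γ, ?_, hT⟩
  unfold IsBCPath at hγ ⊢
  rwa [← Angle.cos_coe α', ← Angle.sin_coe α', ← Angle.cos_coe β', ← Angle.sin_coe β', hα, hβ,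
    Angle.cos_coe, Angle.sin_coe, Angle.cos_coe, Angle.sin_coe] at hγ

end HasShortSteering

lemma Steerable.hasShortSteering {T α β x y d : ℝ} (h : Steerable T α β x y) (hx : x = d)
    (hy : y = 0) (hT : T ≤ d + 2 * π) : HasShortSteering d α β := by
  subst hx hy
  exact ⟨T, α, β, h, hT, rfl, rfl⟩

section Turns

variable {d a b : ℝ}

lemma lsl_length_le {r η : ℝ} (hd : 0 ≤ d) (ha : 0 ≤ a) (hb : 0 ≤ b) (hab : a + b ≤ 2 * π)
    (hx : d - sin a - sin b = r * cos η) (hy : cos b - cos a = r * sin η) :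
    a + b + r ≤ d + 2 * π := by
  obtain ⟨S, m, rfl, rfl⟩ : ∃ S m, a = S - m ∧ b = S + m :=
    ⟨(a + b) / 2, (b - a) / 2, by ring, by ring⟩
  have hsin : 0 ≤ sin S := sin_nonneg_of_nonneg_of_le_pi (by linarith) (by linarith)
  have hsin_le : sin S ≤ π - S := by
    rw [← sin_pi_sub]
    exact sin_le (by linarith)
  have hr : r ^ 2 = (d + 2 * sin S) ^ 2 - 4 * (d * sin S * (1 + cos m)) := by
    rw [sq_eq_of_polar hx hy, sin_sub, sin_add, cos_add, cos_sub]
    linear_combination 4 * sin S ^ 2 * sin_sq_add_cos_sq m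
  have hdefect : 0 ≤ d * sin S * (1 + cos m) :=
    mul_nonneg (mul_nonneg hd hsin) (by linarith [neg_one_le_cos m])
  have hle : r ≤ d + 2 * sin S := le_of_sq_le_sq (by linarith) (by linarith)
  linarith

lemma hasShortSteering_of_lsl {r η : ℝ} (hd : 0 ≤ d) (ha : 0 ≤ a) (hb : 0 ≤ b)
    (hab : a + b ≤ 2 * π) (hr : 0 ≤ r) (hx : d - sin a - sin b = r * cos η)
    (hy : cos b - cos a = r * sin η) (haη : -a ≤ η) (hηb : η ≤ b) :
    HasShortSteering d (-a : ℝ) b := by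
  have hlen := lsl_length_le hd ha hb hab hx hy
  refine (((Steerable.left haη).trans (.straight hr η)).trans (.left hηb)).hasShortSteering
    ?_ ?_ ?_
  · rw [sin_neg]; linarith
  · rw [cos_neg]; linarith
  · linarith

lemma hasShortSteering_of_rsl {l θ : ℝ} (ha : 0 ≤ a) (hb : 0 ≤ b) (hb' : b ≤ 2 * π) (hl : 0 ≤ l)
    (haθ : a ≤ θ) (hθ : θ < π) (h : IsInnerTangent (d + sin a - sin b) (cos a + cos b) l θ) :
    HasShortSteering d (-a : ℝ) b := by
  refine (((Steerable.right (neg_le_neg haθ)).trans (.straight hl (-θ))).trans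
    (.left (by linarith : -θ ≤ b))).hasShortSteering ?_ ?_ ?_
  · simp only [sin_neg, cos_neg]
    linarith [h.1]
  · simp only [sin_neg, cos_neg]
    linarith [h.2]
  · have hstart := add_sin_le_add_tan_half_mul_one_add_cos ha (ha.trans haθ) hθ
    have hend := add_sin_le_add_tan_half_mul_one_add_cos (sub_nonneg.2 hb') (ha.trans haθ) hθ
    rw [sin_two_pi_sub, cos_two_pi_sub] at hend
    linarith [h.length_eq (ha.trans haθ) hθ]

lemma hasShortSteering_of_lsr {l θ : ℝ} (ha : 0 ≤ a) (hb : b ≤ 2 * π) (hl : 2 ≤ l) (hθ₀ : 0 ≤ θ)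
    (hθ : θ ≤ π / 2) (h : IsInnerTangent (d + sin b - sin a) (cos a + cos b) l θ)
    (hturn : (2 - (cos a + cos b)) ^ 2 / 4 ≤ (b - sin b) - (a - sin a)) :
    HasShortSteering d (-a : ℝ) b := by
  have hsteer := ((Steerable.left (by linarith : -a ≤ θ)).trans
    (.straight (by linarith : 0 ≤ l) θ)).trans (.right (by linarith : b - 2 * π ≤ θ))
  have hshort : HasShortSteering d (-a : ℝ) (b - 2 * π : ℝ) := by
    refine hsteer.hasShortSteering ?_ ?_ ?_
    · simp only [sin_neg, sin_sub_two_pi]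
      linarith [h.1]
    · simp only [cos_neg, cos_sub_two_pi]
      linarith [h.2]
    · have hπ := pi_pos
      have htan : θ / 2 ≤ tan (θ / 2) := le_tan (by linarith) (by linarith)
      have h4tan := h.four_mul_tan_half_le hl hθ₀ hθ
      have hprod : tan (θ / 2) * (2 - (cos a + cos b)) ≤ (2 - (cos a + cos b)) ^ 2 / 4 := by
        nlinarith
      linarith [h.length_eq hθ₀ (by linarith)]
  rwa [Angle.coe_sub, Angle.coe_two_pi, sub_zero] at hshort

lemma hasShortSteering_of_rlr {μ σ : ℝ} (hμ₀ : 0 ≤ μ) (haμ : a ≤ μ - σ) (hbμ : b ≤ μ + σ)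
    (hx : d + sin a + sin b = 4 * sin μ * cos σ) (hy : cos a - cos b = 4 * sin μ * sin σ)
    (hlen : 4 * μ - a - b ≤ d + 2 * π) : HasShortSteering d (-a : ℝ) b := by
  refine (((Steerable.right (neg_le_neg haμ)).trans (.left (by linarith : -(μ - σ) ≤ μ + σ))).trans
    (.right hbμ)).hasShortSteering ?_ ?_ ?_
  · simp only [sin_neg, sin_add, sin_sub]
    linarith
  · simp only [cos_neg, cos_add, cos_sub]
    linarith
  · linarith

end Turns

/-! ### Choice of the motion -/

section Cases

variable {d a b : ℝ}

-- The two products are the components of the vector from the left start circle to the left goal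
-- circle in the frame of the initial heading.
lemma le_of_isInnerTangent {l θ : ℝ} (h : IsInnerTangent (d + sin a - sin b) (cos a + cos b) l θ)
    (ha : a < π / 2) (hθ : 0 ≤ θ)
    (hturn : (d - sin a - sin b) * sin a < (cos a - cos b) * cos a)
    (hforward : 0 < (d - sin a - sin b) * cos a + (cos a - cos b) * sin a) : a ≤ θ := by
  by_contra! hθa
  have hsin : 0 < sin (a - θ) := sin_pos_of_pos_of_lt_pi (by linarith) (by linarith [pi_pos])
  have hcos : 0 < cos (a - θ) := cos_pos_of_mem_Ioo ⟨by linarith [pi_pos], by linarith⟩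
  have hturn' : l * sin (a - θ) + 2 * cos (a - θ) < 2 := by
    have : l * sin (a - θ) + 2 * cos (a - θ) =
        2 + ((d - sin a - sin b) * sin a - (cos a - cos b) * cos a) := by
      rw [sin_sub, cos_sub]
      linear_combination -sin a * h.1 - cos a * h.2 + 2 * sin_sq_add_cos_sq a
    linarith
  have hforward' : 2 * sin (a - θ) < l * cos (a - θ) := by
    have : l * cos (a - θ) - 2 * sin (a - θ) =
        (d - sin a - sin b) * cos a + (cos a - cos b) * sin a := by
      rw [sin_sub, cos_sub]
      linear_combination -cos a * h.1 + sin a * h.2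
    linarith
  nlinarith [mul_lt_mul_of_pos_right hturn' hcos, mul_lt_mul_of_pos_right hforward' hsin,
    sin_sq_add_cos_sq (a - θ), cos_le_one (a - θ)]

lemma hasShortSteering_of_far (ha : 0 ≤ a) (ha' : a < π / 2) (hb : 0 ≤ b) (hb' : b ≤ 2 * π)
    (hcos : cos b ≤ cos a) (hahead : 0 < d - sin a - sin b)
    (hturn : (d - sin a - sin b) * sin a < (cos a - cos b) * cos a)
    (hfar : 4 ≤ (d + sin a - sin b) ^ 2 + (cos a + cos b) ^ 2) :
    HasShortSteering d (-a : ℝ) b := by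
  have hcosa : 0 < cos a := cos_pos_of_mem_Ioo ⟨by linarith, ha'⟩
  have hsina : 0 ≤ sin a := sin_nonneg_of_nonneg_of_le_pi ha (by linarith)
  have hforward : 0 < (d - sin a - sin b) * cos a + (cos a - cos b) * sin a :=
    add_pos_of_pos_of_nonneg (mul_pos hahead hcosa) (mul_nonneg (sub_nonneg.2 hcos) hsina)
  obtain ⟨l, θ, htangent, hl, -, hθ₀, hθ, -⟩ := exists_isInnerTangent
    (by linarith : 0 < d + sin a - sin b) (by linarith [cos_le_one a]) hfar
  exact hasShortSteering_of_rsl ha hb hb' hl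
    (le_of_isInnerTangent htangent ha' hθ₀ hturn hforward) hθ htangent

lemma le_and_add_lt_pi_of_sin_lt_sin (ha : 0 ≤ a) (ha' : a < π / 2) (hb : 0 ≤ b)
    (hb' : b ≤ 2 * π) (hcos : cos b ≤ cos a) (hsin : sin a < sin b) : a ≤ b ∧ a + b < π := by
  have hsina : 0 ≤ sin a := sin_nonneg_of_nonneg_of_le_pi ha (by linarith)
  have hbπ : b < π := by
    by_contra! hπb
    have := sin_nonneg_of_nonneg_of_le_pi (x := b - π) (by linarith) (by linarith)
    rw [sin_sub_pi] at this
    linarith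
  refine ⟨?_, ?_⟩
  · by_contra! hba
    linarith [cos_lt_cos_of_nonneg_of_le_pi hb (by linarith) hba]
  · by_contra! hπ
    have := sin_le_sin_of_le_of_le_pi_div_two (x := π - b) (by linarith) ha'.le (by linarith)
    rw [sin_pi_sub] at this
    linarith

lemma cos_half_add_lt_two_mul_sin_half_sub (hd : 2 ≤ d) (hcos : 0 < cos ((a + b) / 2))
    (hclose : (d + sin a - sin b) ^ 2 + (cos a + cos b) ^ 2 < 4) :
    cos ((a + b) / 2) < 2 * sin ((b - a) / 2) := by
  obtain ⟨S, m, rfl, rfl⟩ : ∃ S m, a = S - m ∧ b = S + m :=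
    ⟨(a + b) / 2, (b - a) / 2, by ring, by ring⟩
  rw [show (S - m + (S + m)) / 2 = S by ring] at hcos ⊢
  rw [show (S + m - (S - m)) / 2 = m by ring]
  have hexpand : (d + sin (S - m) - sin (S + m)) ^ 2 + (cos (S - m) + cos (S + m)) ^ 2 =
      d ^ 2 + 4 * cos S ^ 2 - 4 * d * (cos S * sin m) := by
    rw [sin_sub, sin_add, cos_add, cos_sub]
    linear_combination 4 * cos S ^ 2 * sin_sq_add_cos_sq m
  rw [hexpand] at hclose
  by_contra! hle
  have hmul : cos S * (2 * sin m) ≤ cos S * cos S := by gcongr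
  nlinarith [cos_sq_le_one S]

lemma eight_le_sq_dist_right_centers (hd : 2 ≤ d) (ha : 0 ≤ a) (hab : a ≤ b) (habπ : a + b < π)
    (hcos : cos ((a + b) / 2) < 2 * sin ((b - a) / 2)) :
    8 ≤ (d + sin a + sin b) ^ 2 + (cos a - cos b) ^ 2 := by
  obtain ⟨S, m, rfl, rfl⟩ : ∃ S m, a = S - m ∧ b = S + m :=
    ⟨(a + b) / 2, (b - a) / 2, by ring, by ring⟩
  rw [show (S - m + (S + m)) / 2 = S by ring, show (S + m - (S - m)) / 2 = m by ring] at hcos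
  have hsinm : sin m ≤ sin S :=
    sin_le_sin_of_le_of_le_pi_div_two (by linarith) (by linarith) (by linarith)
  have hsinS : 0 ≤ sin S := sin_nonneg_of_nonneg_of_le_pi (by linarith) (by linarith)
  have hcosS : 0 < cos S := cos_pos_of_mem_Ioo ⟨by linarith, by linarith⟩
  have hcosm : cos S ≤ cos m := cos_le_cos_of_nonneg_of_le_pi (by linarith) (by linarith)
    (by linarith)
  calc (8 : ℝ) ≤ 4 + 4 * 2 * (sin S * cos S) + 4 * sin S ^ 2 := by
        nlinarith [sin_sq_add_cos_sq S]
    _ ≤ d ^ 2 + 4 * d * (sin S * cos m) + 4 * sin S ^ 2 := by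
        have : 2 ^ 2 ≤ d ^ 2 := by gcongr
        gcongr
        linarith
    _ = (d + sin (S - m) + sin (S + m)) ^ 2 + (cos (S - m) - cos (S + m)) ^ 2 := by
        rw [sin_sub, sin_add, cos_add, cos_sub]
        linear_combination -4 * sin S ^ 2 * sin_sq_add_cos_sq m

lemma sq_add_two_mul_sin_add_sq_sub_two_mul_cos_le {X Y : ℝ} (h : X ^ 2 + Y ^ 2 ≤ 4) (t : ℝ) :
    (X + 2 * sin t) ^ 2 + (Y - 2 * cos t) ^ 2 ≤ 4 ^ 2 := by
  have hlagrange : (X * sin t - Y * cos t) ^ 2 + (X * cos t + Y * sin t) ^ 2 = X ^ 2 + Y ^ 2 := by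
    linear_combination (X ^ 2 + Y ^ 2) * sin_sq_add_cos_sq t
  have hproj : X * sin t - Y * cos t ≤ 2 :=
    le_of_sq_le_sq (by linarith [sq_nonneg (X * cos t + Y * sin t)]) (by norm_num)
  linarith [sin_sq_add_cos_sq t]

lemma add_lt_pi_div_two_of_polar {D σ : ℝ} (hd : 0 < d) (ha : 0 ≤ a) (hab : a ≤ b)
    (habπ : a + b < π) (hD : 0 ≤ D) (hσ : σ ≤ π / 2)
    (hx : d + sin a + sin b = D * cos σ) (hy : cos a - cos b = D * sin σ) : σ + a < π / 2 := by
  by_contra! hge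
  have hneg : cos (σ + a) ≤ 0 := cos_nonpos_of_pi_div_two_le_of_le hge (by linarith)
  have hexpand : D * cos (σ + a) = d * cos a + sin (a + b) := by
    rw [cos_add, sin_add]
    linear_combination -cos a * hx + sin a * hy
  have hsin : 0 ≤ sin (a + b) := sin_nonneg_of_nonneg_of_le_pi (by linarith) habπ.le
  have hcos : 0 < cos a := cos_pos_of_mem_Ioo ⟨by linarith, by linarith⟩
  nlinarith [mul_pos hd hcos]

lemma le_pi_sub_arcsin_add_of_polar {D σ : ℝ} (hb : b < π) (hD : 0 ≤ D) (hD4 : D ≤ 4)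
    (hσ : 0 ≤ σ) (hx : d + sin a + sin b = D * cos σ) (hy : cos a - cos b = D * sin σ)
    (hclose : (d + sin a - sin b) ^ 2 + (cos a + cos b) ^ 2 < 4) :
    b ≤ π - arcsin (D / 4) + σ := by
  by_contra! hlt
  have hsin : sin (b - σ) < D / 4 := by
    rw [← sin_pi_sub, ← sin_arcsin (x := D / 4) (by linarith) (by linarith)]
    exact sin_lt_sin_of_lt_of_le_pi_div_two (by linarith [pi_pos]) (arcsin_le_pi_div_two _)
      (by linarith)
  have hexpand : D * sin (b - σ) = d * sin b + 1 - cos (a + b) := by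
    rw [sin_sub, cos_add]
    linear_combination -sin b * hx + cos b * hy + sin_sq_add_cos_sq b
  have hmul : D * sin (b - σ) ≤ D * (D / 4) := by gcongr
  rw [hexpand, cos_add] at hmul
  linarith [sq_eq_of_polar hx hy, sin_sq_add_cos_sq b, sin_sq_add_cos_sq a]

lemma pi_div_four_le_arcsin_div_four {D : ℝ} (hD : 0 ≤ D) (h8 : 8 ≤ D ^ 2) :
    π / 4 ≤ arcsin (D / 4) := by
  rw [le_arcsin_iff_sin_le' ⟨by linarith [pi_pos], by linarith [pi_pos]⟩, sin_pi_div_four]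
  exact le_of_sq_le_sq (by rw [div_pow, sq_sqrt zero_le_two]; linarith) (by positivity)

lemma hasShortSteering_of_close_of_le (hd : 2 ≤ d) (ha : 0 ≤ a) (hab : a ≤ b) (habπ : a + b < π)
    (hclose : (d + sin a - sin b) ^ 2 + (cos a + cos b) ^ 2 < 4) (hwide : π - 2 ≤ a + b) :
    HasShortSteering d (-a : ℝ) b := by
  have hcosS : 0 < cos ((a + b) / 2) := cos_pos_of_mem_Ioo ⟨by linarith, by linarith⟩
  have h8 := eight_le_sq_dist_right_centers hd ha hab habπ
    (cos_half_add_lt_two_mul_sin_half_sub hd hcosS hclose)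
  have hsina : 0 ≤ sin a := sin_nonneg_of_nonneg_of_le_pi ha (by linarith)
  have hsinb : 0 ≤ sin b := sin_nonneg_of_nonneg_of_le_pi (by linarith) (by linarith)
  have hcos : cos b ≤ cos a := cos_le_cos_of_nonneg_of_le_pi ha (by linarith) hab
  obtain ⟨D, σ, hD, hσ₀, hσ, hx, hy⟩ := exists_polar_of_nonneg
    (by linarith : 0 ≤ d + sin a + sin b) (sub_nonneg.2 hcos)
  have hD4 : D ≤ 4 := by
    refine le_of_sq_le_sq ?_ (by norm_num)
    rw [sq_eq_of_polar hx hy]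
    linarith [sq_add_two_mul_sin_add_sq_sub_two_mul_cos_le hclose.le b]
  have hsin : sin (π - arcsin (D / 4)) = D / 4 := by
    rw [sin_pi_sub, sin_arcsin (by linarith) (by linarith)]
  have harcsin := pi_div_four_le_arcsin_div_four hD (by rwa [sq_eq_of_polar hx hy])
  have harcsin' := arcsin_le_pi_div_two (D / 4)
  have hσa := add_lt_pi_div_two_of_polar (by linarith) ha hab habπ hD hσ hx hy
  exact hasShortSteering_of_rlr (μ := π - arcsin (D / 4)) (σ := σ) (by linarith) (by linarith)
    (le_pi_sub_arcsin_add_of_polar (by linarith) hD hD4 hσ₀ hx hy hclose)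
    (by rw [hsin]; linarith) (by rw [hsin]; linarith) (by linarith)

lemma le_cos_sq_of_lt_pi_div_two_sub_one {S : ℝ} (hS₀ : 0 ≤ S) (hS : S < π / 2 - 1) :
    56 / 81 ≤ cos S ^ 2 := by
  have hsin : sin S ≤ 5 / 9 := by
    have := sin_le_sin_of_le_of_le_pi_div_two (by linarith [pi_pos]) (by linarith) hS.le
    rw [sin_pi_div_two_sub] at this
    exact this.trans cos_one_le
  have hsin₀ : 0 ≤ sin S := sin_nonneg_of_nonneg_of_le_pi hS₀ (by linarith [pi_pos])
  have hsq : sin S ^ 2 ≤ (5 / 9) ^ 2 := by gcongr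
  linarith [sin_sq_add_cos_sq S]

lemma eight_le_sq_add_sq {c x y : ℝ} (hc : 56 / 81 ≤ c ^ 2) (hx : 2 + c ^ 2 ≤ x)
    (hy : 2 * c ^ 2 ≤ y) : 8 ≤ x ^ 2 + y ^ 2 := by
  have hx' : (2 + 56 / 81) ^ 2 ≤ x ^ 2 := by gcongr; linarith
  have hy' : (2 * (56 / 81)) ^ 2 ≤ y ^ 2 := by gcongr; linarith
  linarith

lemma sq_two_sub_div_four_le {c y m : ℝ} (hc : 56 / 81 ≤ c ^ 2) (hc₀ : 0 < c) (hc₁ : c ≤ 1)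
    (hm : 0 ≤ m) (hcm : c < 2 * sin m) (hy : 2 * c ^ 2 ≤ y) (hy₂ : y ≤ 2) :
    (2 - y) ^ 2 / 4 ≤ 2 * m - 2 * c * sin m := by
  have hsin := sin_le hm
  have hc' : 8 / 10 ≤ c := le_of_sq_le_sq (by linarith) hc₀.le
  have hbound : (1 - c ^ 2) * (1 + c) ≤ 2 * m := by nlinarith
  calc (2 - y) ^ 2 / 4 ≤ (2 - 2 * c ^ 2) ^ 2 / 4 := by gcongr
    _ = (1 - c) * ((1 - c ^ 2) * (1 + c)) := by ring
    _ ≤ (1 - c) * (2 * m) := by gcongr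
    _ = 2 * m - 2 * c * m := by ring
    _ ≤ 2 * m - 2 * c * sin m := by gcongr

lemma hasShortSteering_of_close_of_lt (hd : 2 ≤ d) (ha : 0 ≤ a) (hab : a ≤ b)
    (hclose : (d + sin a - sin b) ^ 2 + (cos a + cos b) ^ 2 < 4) (hnarrow : a + b < π - 2) :
    HasShortSteering d (-a : ℝ) b := by
  have hcosS : 0 < cos ((a + b) / 2) := cos_pos_of_mem_Ioo ⟨by linarith [pi_pos], by linarith⟩
  have hcS := cos_half_add_lt_two_mul_sin_half_sub hd hcosS hclose
  set c := cos ((a + b) / 2)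
  have hc : 56 / 81 ≤ c ^ 2 := le_cos_sq_of_lt_pi_div_two_sub_one (by linarith) (by linarith)
  have hcosm : c ≤ cos ((b - a) / 2) :=
    cos_le_cos_of_nonneg_of_le_pi (by linarith) (by linarith [pi_pos]) (by linarith)
  have hsin : sin b - sin a = 2 * c * sin ((b - a) / 2) := by
    rw [sin_sub_sin, add_comm b a]
    ring
  have hcos : cos a + cos b = 2 * c * cos ((b - a) / 2) := by
    rw [add_comm, cos_add_cos, add_comm b a]
  have hX : 2 + c ^ 2 ≤ d + sin b - sin a := by nlinarith
  have hY : 2 * c ^ 2 ≤ cos a + cos b := by nlinarith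
  have hY₂ : cos a + cos b ≤ 2 := by linarith [cos_le_one a, cos_le_one b]
  have h8 := eight_le_sq_add_sq hc hX hY
  obtain ⟨l, θ, htangent, hl₀, hl, hθ₀, -, hθ⟩ :=
    exists_isInnerTangent (by linarith : 0 < d + sin b - sin a) hY₂ (by linarith)
  have hl₂ : 2 ≤ l := le_of_sq_le_sq (by linarith) hl₀
  refine hasShortSteering_of_lsr ha (by linarith) hl₂ hθ₀ (hθ (by linarith)) htangent ?_
  have := sq_two_sub_div_four_le hc hcosS (cos_le_one _) (by linarith) hcS hY hY₂
  linarith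

lemma hasShortSteering_neg_of_cos_le (hd : 2 ≤ d) (ha : 0 ≤ a) (hb : 0 ≤ b) (hab : a + b ≤ 2 * π)
    (hcos : cos b ≤ cos a) : HasShortSteering d (-a : ℝ) b := by
  obtain ⟨r, τ, hr, hτ₀, hτ, hx, hy⟩ := exists_polar_of_nonneg
    (by linarith [sin_le_one a, sin_le_one b] : 0 ≤ d - sin a - sin b) (sub_nonneg.2 hcos)
  rcases le_or_gt τ a with hτa | haτ
  · exact hasShortSteering_of_lsl (η := -τ) (by linarith) ha hb hab hr (by rw [cos_neg, hx])
      (by rw [sin_neg]; linarith) (by linarith) (by linarith)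
  have ha' : a < π / 2 := by linarith
  rcases le_or_gt 4 ((d + sin a - sin b) ^ 2 + (cos a + cos b) ^ 2) with hfar | hclose
  · have hsina : sin a < 1 := by
      rw [← sin_pi_div_two]
      exact sin_lt_sin_of_lt_of_le_pi_div_two (by linarith) le_rfl ha'
    have hahead : 0 < d - sin a - sin b := by linarith [sin_le_one b]
    have hr' : 0 < r := hr.lt_of_ne fun hr₀ => by
      rw [hx, ← hr₀, zero_mul] at hahead
      exact hahead.false
    have hturn : 0 < r * sin (τ - a) :=
      mul_pos hr' (sin_pos_of_pos_of_lt_pi (by linarith) (by linarith))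
    rw [sin_sub] at hturn
    exact hasShortSteering_of_far ha ha' hb (by linarith) hcos hahead (by rw [hx, hy]; linarith)
      hfar
  · have hsin : sin a < sin b := by nlinarith [sq_nonneg (cos a + cos b)]
    obtain ⟨hle, habπ⟩ := le_and_add_lt_pi_of_sin_lt_sin ha ha' hb (by linarith) hcos hsin
    rcases le_or_gt (π - 2) (a + b) with hwide | hnarrow
    · exact hasShortSteering_of_close_of_le hd ha hle habπ hclose hwide
    · exact hasShortSteering_of_close_of_lt hd ha hle hclose hnarrow

end Cases

/-! ### Reduction by symmetry -/

lemma hasShortSteering_of_le {d A B : ℝ} (hd : 2 ≤ d) (hA : 0 ≤ A) (hAB : A ≤ B)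
    (hB : B ≤ 2 * π) : HasShortSteering d (-A : ℝ) (-B : ℝ) := by
  have hcoe : ((2 * π - B : ℝ) : Angle) = (-B : ℝ) := by
    rw [sub_eq_add_neg, Angle.coe_add, Angle.coe_two_pi, zero_add]
  rw [← hcoe]
  rcases le_total (cos B) (cos A) with hcos | hcos
  · exact hasShortSteering_neg_of_cos_le hd hA (by linarith) (by linarith)
      (by rwa [cos_two_pi_sub])
  · have := (hasShortSteering_neg_of_cos_le (a := 2 * π - B) hd (by linarith) hA (by linarith)
      (by rwa [cos_two_pi_sub])).neg.swap
    rwa [Angle.coe_neg, neg_neg, ← Angle.coe_neg] at this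

lemma hasShortSteering_of_two_le {d : ℝ} (hd : 2 ≤ d) (α β : Angle) : HasShortSteering d α β := by
  have exists_rep (δ : Angle) : ∃ A ∈ Set.Ico 0 (2 * π), ((-A : ℝ) : Angle) = δ := by
    induction δ using Angle.induction_on with | _ x =>
    refine ⟨toIcoMod two_pi_pos 0 (-x), by simpa using toIcoMod_mem_Ico two_pi_pos 0 (-x), ?_⟩
    rw [Angle.coe_neg, Angle.coe_toIcoMod, Angle.coe_neg, neg_neg]
  obtain ⟨A, hA, rfl⟩ := exists_rep α
  obtain ⟨B, hB, rfl⟩ := exists_rep β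
  rcases le_total A B with h | h
  · exact hasShortSteering_of_le hd hA.1 h hB.2.le
  · exact (hasShortSteering_of_le hd hB.1 h hA.2.le).swap

lemma exists_isBCPath_length_le {d : ℝ} (hd : 2 ≤ d) (α β : ℝ) :
    ∃ T γ, IsBCPath T 0 0 α d 0 β γ ∧ T ≤ d + 2 * π :=
  (hasShortSteering_of_two_le hd α β).exists_isBCPath

/-- For `d ≥ 2` and arbitrary angles `α, β`, there is a
bounded-curvature path from `(0, 0, α)` to `(d, 0, β)` of length at most
`d + 2π`; consequently (combined with the `d + 2π` lower bound at
`α = β = π`), the supremum over all `(α, β)` of the infimum of lengths of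
bounded-curvature paths from `(0, 0, α)` to `(d, 0, β)`, minus `d`,
equals `2π`. -/
theorem dub_eq_two_pi_for_d_ge_two (d : ℝ) (hd : 2 ≤ d) :
    (∀ α β : ℝ, ∃ (T : ℝ) (γ : ℝ → EuclideanSpace ℝ (Fin 2)),
      IsBCPath T 0 0 α d 0 β γ ∧ T ≤ d + 2 * π) ∧
    sSup {x : ℝ | ∃ α β : ℝ,
        x = sInf {T : ℝ | ∃ γ : ℝ → EuclideanSpace ℝ (Fin 2),
          IsBCPath T 0 0 α d 0 β γ}} - d = 2 * π := by
  refine ⟨exists_isBCPath_length_le hd, ?_⟩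
  have sInf_le (α β : ℝ) : sInf {T | ∃ γ, IsBCPath T 0 0 α d 0 β γ} ≤ d + 2 * π := by
    obtain ⟨T, γ, hγ, hT⟩ := exists_isBCPath_length_le hd α β
    exact csInf_le_of_le ⟨0, fun _ ⟨_, hη⟩ => hη.1⟩ ⟨γ, hγ⟩ hT
  have le_sInf : d + 2 * π ≤ sInf {T | ∃ γ, IsBCPath T 0 0 π d 0 π γ} := by
    obtain ⟨T, γ, hγ, -⟩ := exists_isBCPath_length_le hd π π
    exact le_csInf ⟨T, γ, hγ⟩ fun _ ⟨_, hη⟩ => hη.add_two_pi_le (by linarith)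
  have hgreatest : IsGreatest {x : ℝ | ∃ α β : ℝ, x = sInf {T | ∃ γ, IsBCPath T 0 0 α d 0 β γ}}
      (d + 2 * π) := by
    refine ⟨⟨π, π, le_sInf.antisymm (sInf_le π π)⟩, ?_⟩
    rintro _ ⟨α, β, rfl⟩
    exact sInf_le α β
  rw [hgreatest.csSup_eq, add_sub_cancel_left]
end

section
/- For every d ≥ 0 and all real angles α, β, there exists a bounded-curvature path from configuration (0,0,α) to (d,0,β) of length at most d + 7π/3. -/
open Real

/-!
A path is determined by its starting point and its heading, a `1`-Lipschitz function of arc length;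
left arcs, right arcs and segments can be concatenated freely, and the displacement of a
concatenation is a sum of explicit complex numbers. After a rotation, a reflection and a
time reversal, the headings are `-h` and `h` with `0 ≤ h ≤ π / 2`, and the displacement `z` lies in
the upper half-plane.

The right turning circles (word RSR) or the left ones (word LSL) can be joined by a common outer
tangent at an extra cost of at most `2 * π`, unless the direction of that tangent is out of range.
The circles of opposite orientation are then joined by a common inner tangent (LSR or RSL) if they
do not overlap, and by a third circle (RLR or LRL) if they do. The constant `7 * π / 3` comes from
this last case: the limit `z → 0` with `h = π / 2` has outer circles whose centres are `2` apart,
which forces a middle arc of length `5 * π / 3` and two outer arcs of length `π / 3` each. -/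

open Complex (I arg)
open scoped ComplexConjugate

/-- The unit vector with heading `a`, in the plane identified with `ℂ`. -/
noncomputable def dir (a : Real.Angle) : ℂ := a.toCircle

namespace dir

variable (a b : Real.Angle) (x y : ℝ)

theorem eq_exp : dir x = Complex.exp (x * I) := Circle.coe_exp x

@[simp] theorem re_coe : (dir x).re = cos x := by rw [eq_exp, Complex.exp_ofReal_mul_I_re]

@[simp] theorem im_coe : (dir x).im = sin x := by rw [eq_exp, Complex.exp_ofReal_mul_I_im]

@[simp] theorem norm_eq_one : ‖dir a‖ = 1 := Circle.norm_coe _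

@[simp] theorem zero_eq_one : dir 0 = 1 := by simp [dir]

theorem add_eq_mul : dir (a + b) = dir a * dir b := by simp [dir]

theorem neg_eq_conj : dir (-a) = conj (dir a) := by simp [dir, ← Circle.coe_inv_eq_conj]

theorem mul_neg_eq_one : dir a * dir (-a) = 1 := by rw [← add_eq_mul, add_neg_cancel, zero_eq_one]

theorem neg_add_self : dir ↑(-x) + dir x = 2 * cos x := by
  apply Complex.ext <;> simp [two_mul, -Real.Angle.coe_neg, -Complex.ofReal_cos]

theorem I_mul_neg_sub_self : I * (dir ↑(-x) - dir x) = 2 * sin x := by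
  apply Complex.ext <;> simp [two_mul, -Real.Angle.coe_neg, -Complex.ofReal_sin]

theorem norm_mul_arg (z : ℂ) : ‖z‖ * dir (arg z) = z := by
  rw [eq_exp, Complex.norm_mul_exp_arg_mul_I]

theorem four_mul_cos_arccos_mul_arg {z : ℂ} (hz : ‖z‖ ≤ 4) :
    4 * cos (arccos (‖z‖ / 4)) * dir (arg z) = z := by
  rw [cos_arccos (by linarith [norm_nonneg z]) (by linarith), Complex.ofReal_div,
    Complex.ofReal_ofNat, mul_div_cancel₀ _ (by norm_num), norm_mul_arg]

theorem I_mul_sub_quarter_sub_add_quarter :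
    I * (dir ↑(x - y - π / 2) - dir ↑(x + y + π / 2)) = 2 * cos y * dir x := by
  have hchord := I_mul_neg_sub_self (y + π / 2)
  rw [sin_add_pi_div_two] at hchord
  rw [show x - y - π / 2 = x + -(y + π / 2) by ring, add_assoc x, Real.Angle.coe_add x,
    Real.Angle.coe_add x, add_eq_mul, add_eq_mul]
  linear_combination dir x * hchord

@[fun_prop]
theorem continuous_coe : Continuous fun t : ℝ ↦ dir t := by
  simp only [eq_exp]
  fun_prop

theorem hasDerivAt_coe : HasDerivAt (fun t : ℝ ↦ dir t) (I * dir x) x := by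
  have h := ((Complex.ofRealCLM.hasDerivAt (x := x)).mul_const I).cexp
  simpa [eq_exp, mul_comm] using h

theorem integral_coe : ∫ t in x..y, dir t = I * (dir x - dir y) := by
  have hderiv (t : ℝ) : HasDerivAt (fun t : ℝ ↦ -I * dir t) (dir t) t := by
    simpa [← mul_assoc] using (hasDerivAt_coe t).const_mul (-I)
  rw [intervalIntegral.integral_eq_sub_of_hasDerivAt (fun t _ ↦ hderiv t)
    (continuous_coe.intervalIntegrable _ _)]
  ring

theorem dist_coe_le : dist (dir x) (dir y) ≤ dist x y := by
  have hfactor : dir x - dir y = dir y * (Complex.exp (I * ↑(x - y)) - 1) := by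
    rw [mul_comm I, ← eq_exp, mul_sub, mul_one, ← add_eq_mul, ← Real.Angle.coe_add,
      add_sub_cancel]
  rw [dist_eq_norm, dist_eq_norm, hfactor, norm_mul, norm_eq_one, one_mul]
  exact Real.norm_exp_I_mul_ofReal_sub_one_le

end dir

/-- Some bounded-curvature path of length at most `L` has displacement `z`, initial heading `a` and
final heading `b`. The path is encoded by its `1`-Lipschitz heading `θ`, a real-valued lift of the
direction of the velocity, from which the displacement is recovered by integration. -/
def BCReachable (L : ℝ) (z : ℂ) (a b : Real.Angle) : Prop :=
  ∃ T ∈ Set.Icc 0 L, ∃ θ : ℝ → ℝ, LipschitzWith 1 θ ∧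
    (θ 0 : Real.Angle) = a ∧ (θ T : Real.Angle) = b ∧ ∫ t in 0..T, dir (θ t) = z

theorem lipschitzWith_min_add_max {K : NNReal} {θ η : ℝ → ℝ} (hθ : LipschitzWith K θ)
    (hη : LipschitzWith K η) (T : ℝ) :
    LipschitzWith K fun t ↦ θ (min t T) + η (max (t - T) 0) := by
  have hsplit (s t : ℝ) :
      dist (min s T) (min t T) + dist (max (s - T) 0) (max (t - T) 0) = dist s t := by
    simp only [Real.dist_eq]
    grind
  refine LipschitzWith.of_dist_le_mul fun s t ↦ ?_
  calc dist (θ (min s T) + η (max (s - T) 0)) (θ (min t T) + η (max (t - T) 0))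
      ≤ dist (θ (min s T)) (θ (min t T)) + dist (η (max (s - T) 0)) (η (max (t - T) 0)) :=
        dist_add_add_le _ _ _ _
    _ ≤ K * dist (min s T) (min t T) + K * dist (max (s - T) 0) (max (t - T) 0) :=
        add_le_add (hθ.dist_le_mul _ _) (hη.dist_le_mul _ _)
    _ = K * dist s t := by rw [← mul_add, hsplit]

namespace BCReachable

variable {L M : ℝ} {z w : ℂ} {a b c : Real.Angle}

theorem mono (h : BCReachable L z a b) (hLM : L ≤ M) : BCReachable M z a b := by
  obtain ⟨T, hT, hpath⟩ := h
  exact ⟨T, ⟨hT.1, hT.2.trans hLM⟩, hpath⟩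

theorem straight (hL : 0 ≤ L) (a : ℝ) : BCReachable L (L * dir a) a a :=
  ⟨L, ⟨hL, le_rfl⟩, fun _ ↦ a, LipschitzWith.const' a, rfl, rfl, by simp⟩

theorem left {a b : ℝ} (hab : a ≤ b) : BCReachable (b - a) (I * (dir a - dir b)) a b := by
  refine ⟨b - a, ⟨sub_nonneg.2 hab, le_rfl⟩, fun t ↦ t + a, ?_, by simp, by simp, ?_⟩
  · exact LipschitzWith.of_dist_le_mul fun s t ↦ by simp
  · rw [intervalIntegral.integral_comp_add_right (fun t : ℝ ↦ dir t), dir.integral_coe]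
    simp

theorem reflect (h : BCReachable L z a b) : BCReachable L (conj z) (-a) (-b) := by
  obtain ⟨T, hT, θ, hθ, rfl, rfl, rfl⟩ := h
  refine ⟨T, hT, fun t ↦ -θ t, ?_, by simp, by simp, ?_⟩
  · exact LipschitzWith.of_dist_le_mul fun s t ↦ by simpa using hθ.dist_le_mul s t
  · simp only [Real.Angle.coe_neg, dir.neg_eq_conj, intervalIntegral.intervalIntegral_conj]

theorem right {a b : ℝ} (hba : b ≤ a) : BCReachable (a - b) (I * (dir b - dir a)) a b := by
  have hleft := (left (neg_le_neg hba)).reflect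
  rw [map_mul, map_sub, Complex.conj_I, ← dir.neg_eq_conj, ← dir.neg_eq_conj] at hleft
  simp only [Real.Angle.coe_neg, neg_neg] at hleft
  convert hleft using 1 <;> ring

theorem symm (h : BCReachable L z a b) : BCReachable L z b a := by
  obtain ⟨T, hT, θ, hθ, rfl, rfl, rfl⟩ := h
  refine ⟨T, hT, fun t ↦ θ (T - t), ?_, by simp, by simp, ?_⟩
  · exact LipschitzWith.of_dist_le_mul fun s t ↦
      (hθ.dist_le_mul _ _).trans_eq (by rw [dist_sub_left])
  · rw [intervalIntegral.integral_comp_sub_left (fun t ↦ dir (θ t)), sub_self, sub_zero]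

theorem rotate (h : BCReachable L z a b) (c : Real.Angle) :
    BCReachable L (z * dir c) (a + c) (b + c) := by
  obtain ⟨T, hT, θ, hθ, rfl, rfl, rfl⟩ := h
  induction c using Real.Angle.induction_on with | _ c
  refine ⟨T, hT, fun t ↦ θ t + c, ?_, by simp, by simp, ?_⟩
  · exact LipschitzWith.of_dist_le_mul fun s t ↦ by simpa using hθ.dist_le_mul s t
  · simp only [Real.Angle.coe_add, dir.add_eq_mul, intervalIntegral.integral_mul_const]

theorem trans (hz : BCReachable L z a b) (hw : BCReachable M w b c) :
    BCReachable (L + M) (z + w) a c := by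
  obtain ⟨T, hT, θ, hθ, rfl, rfl, rfl⟩ := hz
  obtain ⟨U, hU, η, hη, hjoin, rfl, rfl⟩ := hw
  let ζ (t : ℝ) : ℝ := θ (min t T) + (η (max (t - T) 0) - η 0)
  have hζ : LipschitzWith 1 ζ := by
    simpa [ζ, add_sub_assoc] using
      (lipschitzWith_min_add_max hθ hη T).sub (LipschitzWith.const (η 0))
  have hζ_left {t : ℝ} (ht : t ≤ T) : (ζ t : Real.Angle) = θ t := by simp [ζ, ht]
  have hζ_right {t : ℝ} (ht : T ≤ t) : (ζ t : Real.Angle) = η (t - T) := by simp [ζ, ht, hjoin]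
  have hint (x y : ℝ) : IntervalIntegrable (fun t ↦ dir (ζ t)) MeasureTheory.volume x y :=
    (dir.continuous_coe.comp hζ.continuous).intervalIntegrable x y
  refine ⟨T + U, ⟨add_nonneg hT.1 hU.1, add_le_add hT.2 hU.2⟩, ζ, hζ, hζ_left hT.1, ?_, ?_⟩
  · simpa using hζ_right (le_add_of_nonneg_right hU.1)
  rw [← intervalIntegral.integral_add_adjacent_intervals (hint 0 T) (hint T (T + U))]
  congr 1
  · refine intervalIntegral.integral_congr fun t ht ↦ ?_
    rw [Set.uIcc_of_le hT.1] at ht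
    simp only [hζ_left ht.2]
  · calc ∫ t in T..T + U, dir (ζ t) = ∫ t in T..T + U, dir (η (t - T)) := by
          refine intervalIntegral.integral_congr fun t ht ↦ ?_
          rw [Set.uIcc_of_le (le_add_of_nonneg_right hU.1)] at ht
          simp only [hζ_right ht.1]
      _ = ∫ t in 0..U, dir (η t) := by
          rw [intervalIntegral.integral_comp_sub_right (fun t ↦ dir (η t)), sub_self,
            add_sub_cancel_left]

theorem exists_isBCPath {α β : ℝ} (h : BCReachable L z α β) (p : ℂ) :
    ∃ T ≤ L, ∃ γ, IsBCPath T p.re p.im α (p + z).re (p + z).im β γ := by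
  obtain ⟨T, hT, θ, hθ, hα, hβ, rfl⟩ := h
  have hcont : Continuous fun t ↦ dir (θ t) := dir.continuous_coe.comp hθ.continuous
  let e := Complex.orthonormalBasisOneI.repr
  have hlip : LipschitzWith 1 fun t ↦ e (dir (θ t)) :=
    LipschitzWith.of_dist_le_mul fun s t ↦ by
      rw [e.dist_map]
      exact (dir.dist_coe_le _ _).trans (hθ.dist_le_mul s t)
  have hderiv (t : ℝ) : HasDerivAt (fun t ↦ e (p + ∫ u in 0..t, dir (θ u))) (e (dir (θ t))) t :=
    e.toContinuousLinearEquiv.toContinuousLinearMap.hasFDerivAt.comp_hasDerivAt t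
      ((hcont.integral_hasStrictDerivAt 0 t).hasDerivAt.const_add p)
  refine ⟨T, hT.2, _, hT.1, _, fun t _ ↦ (hderiv t).hasDerivWithinAt,
    hlip.continuous.continuousOn, fun t _ ↦ ?_, hlip.lipschitzOnWith, ?_, ?_, ?_, ?_⟩
  · rw [e.norm_map, dir.norm_eq_one]
  · simp [e, Complex.orthonormalBasisOneI_repr_apply]
  · simp [e, hα]
  · simp [e]
  · simp [e, hβ]

section Words

variable {a b r ψ : ℝ}

theorem lsl (hr : 0 ≤ r) (haψ : a ≤ ψ) (hψb : ψ ≤ b) :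
    BCReachable (r + (b - a)) (r * dir ψ + I * (dir a - dir b)) a b := by
  convert ((left haψ).trans (straight hr ψ)).trans (left hψb) using 1 <;> ring

theorem rsr (hr : 0 ≤ r) (hψa : ψ ≤ a) (hbψ : b ≤ ψ) :
    BCReachable (r + (a - b)) (r * dir ψ + I * (dir b - dir a)) a b := by
  convert ((right hψa).trans (straight hr ψ)).trans (right hbψ) using 1 <;> ring

theorem lsr (hr : 0 ≤ r) (haψ : a ≤ ψ) (hbψ : b ≤ ψ) :
    BCReachable (r + (2 * ψ - a - b)) ((r - 2 * I) * dir ψ + I * (dir a + dir b)) a b := by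
  convert ((left haψ).trans (straight hr ψ)).trans (right hbψ) using 1 <;> ring

theorem rsl (hr : 0 ≤ r) (hψa : ψ ≤ a) (hψb : ψ ≤ b) :
    BCReachable (r + (a + b - 2 * ψ)) ((r + 2 * I) * dir ψ - I * (dir a + dir b)) a b := by
  convert ((right hψa).trans (straight hr ψ)).trans (left hψb) using 1 <;> ring

-- `w` is the displacement between the centres of the two outer circles.
theorem rlr {w : ℂ} (hw : ‖w‖ ≤ 4) (ha : arg w - arccos (‖w‖ / 4) - π / 2 ≤ a)
    (hb : b ≤ arg w + arccos (‖w‖ / 4) + π / 2) :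
    BCReachable (2 * π + (a - b) + 4 * arccos (‖w‖ / 4)) (w + I * (dir b - dir a)) a b := by
  have hmid : arg w - arccos (‖w‖ / 4) - π / 2 ≤ arg w + arccos (‖w‖ / 4) + π / 2 := by
    linarith [pi_pos, arccos_nonneg (‖w‖ / 4)]
  convert ((right ha).trans (left hmid)).trans (right hb) using 1
  · ring
  · linear_combination -2 * dir.I_mul_sub_quarter_sub_add_quarter (arg w) (arccos (‖w‖ / 4)) -
      dir.four_mul_cos_arccos_mul_arg hw

theorem lrl {w : ℂ} (hw : ‖w‖ ≤ 4) (ha : a ≤ arg w + arccos (‖w‖ / 4) + π / 2)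
    (hb : arg w - arccos (‖w‖ / 4) - π / 2 ≤ b) :
    BCReachable (2 * π + (b - a) + 4 * arccos (‖w‖ / 4)) (w + I * (dir a - dir b)) a b := by
  have hmid : arg w - arccos (‖w‖ / 4) - π / 2 ≤ arg w + arccos (‖w‖ / 4) + π / 2 := by
    linarith [pi_pos, arccos_nonneg (‖w‖ / 4)]
  convert ((left ha).trans (right hmid)).trans (left hb) using 1
  · ring
  · linear_combination -2 * dir.I_mul_sub_quarter_sub_add_quarter (arg w) (arccos (‖w‖ / 4)) -
      dir.four_mul_cos_arccos_mul_arg hw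

end Words

end BCReachable

section Trigonometry

theorem le_arccos_of_le_cos {x y : ℝ} (hy : y ≤ π) (hxy : x ≤ cos y) : y ≤ arccos x := by
  rcases le_total 0 y with hy0 | hy0
  · exact (arccos_cos hy0 hy).symm.le.trans (arccos_le_arccos hxy)
  · exact hy0.trans (arccos_nonneg x)

theorem arccos_le_of_cos_le {x y : ℝ} (hy : 0 ≤ y) (hxy : cos y ≤ x) : arccos x ≤ y := by
  rcases le_total y π with hyπ | hyπ
  · exact (arccos_le_arccos hxy).trans_eq (arccos_cos hy hyπ)
  · exact (arccos_le_pi x).trans hyπ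

theorem le_sqrt_three_mul_sin {x : ℝ} (hx : 0 ≤ x) (hx' : x ≤ π / 2) : x ≤ √3 * sin x := by
  have hjordan : 2 / π * x ≤ sin x := mul_le_sin hx hx'
  have hsqrt : π / 2 ≤ √3 := Real.le_sqrt_of_sq_le (by nlinarith [pi_lt_d2, pi_gt_three])
  calc x = π / 2 * (2 / π * x) := by field_simp
    _ ≤ √3 * sin x := by gcongr

theorem mul_sin_lt_of_mul_sin_sub_le {r a b : ℝ} (ha : 0 < a) (hab : a < b) (hb : b ≤ π)
    (h : r * sin (b - a) ≤ 2 * (1 - cos (b - a))) : r * sin b < 2 * (cos a - cos b) := by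
  have hsin_a : 0 < sin a := sin_pos_of_pos_of_lt_pi ha (by linarith)
  have hsin_b : 0 ≤ sin b := sin_nonneg_of_nonneg_of_le_pi (by linarith) hb
  have hsin : 0 < sin (b - a) := sin_pos_of_pos_of_lt_pi (by linarith) (by linarith)
  have hsq := sin_sq_add_cos_sq (b - a)
  have hcos : cos (b - a) < 1 := by nlinarith
  obtain ⟨δ, rfl⟩ : ∃ δ, b = a + δ := ⟨b - a, by ring⟩
  rw [add_sub_cancel_left] at *
  refine lt_of_mul_lt_mul_right ?_ hsin.le
  calc r * sin (a + δ) * sin δ = r * sin δ * sin (a + δ) := by ring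
    _ ≤ 2 * (1 - cos δ) * sin (a + δ) := by gcongr
    _ < 2 * (1 - cos δ) * sin (a + δ) + 2 * (1 - cos δ) * sin a :=
        lt_add_of_pos_right _ (by have := sub_pos.2 hcos; positivity)
    _ = 2 * (cos a - cos (a + δ)) * sin δ := by
        rw [sin_add, cos_add]
        linear_combination -2 * sin a * hsq

theorem arccos_le_pi_div_three_add {d k D : ℝ} (hd : 0 ≤ d) (hdk : d ≤ 2 * k) (hk : k ≤ π / 2)
    (hD : 2 * cos k - d ≤ D) : arccos (D / 4) ≤ π / 3 + (d + 2 * k) / 4 := by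
  apply arccos_le_of_cos_le (by linarith [pi_pos])
  have hlip : cos (π / 3 + (d + 2 * k) / 4) - cos (π / 3 + k) ≤ (2 * k - d) / 4 := by
    refine (le_abs_self _).trans ((abs_cos_sub_cos_le _ _).trans_eq ?_)
    rw [abs_of_nonpos (by linarith)]
    ring
  rw [cos_add (π / 3) k, cos_pi_div_three, sin_pi_div_three] at hlip
  linarith [le_sqrt_three_mul_sin (show 0 ≤ k by linarith) hk]

theorem two_mul_le_or_five_pi_div_three_le {h τ : ℝ} (hτ : 0 ≤ τ) (hτh : τ ≤ h) (hh : h ≤ π / 2) :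
    2 * τ ≤ π / 3 + 2 * cos h * sin τ ∨ 5 * π / 3 ≤ 2 * h + 4 * τ + 2 * sin τ := by
  have hcos : 0 ≤ cos h := cos_nonneg_of_neg_pi_div_two_le_of_le (by linarith) hh
  rcases le_total τ (π / 6) with hτ6 | hτ6
  · have := sin_nonneg_of_nonneg_of_le_pi hτ (by linarith)
    exact .inl (by linarith [mul_nonneg hcos this])
  refine or_iff_not_imp_right.2 fun hlt ↦ ?_
  rw [not_le] at hlt
  have hsin : 1 / 2 ≤ sin τ := by
    rw [← sin_pi_div_six]
    exact sin_le_sin_of_le_of_le_pi_div_two (by linarith) (by linarith) hτ6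
  obtain ⟨u, hu⟩ : ∃ u, u = 2 * τ - π / 3 := ⟨_, rfl⟩
  have hsin_le_cos : sin (u + 1 / 2) ≤ cos h := by
    rw [← sin_pi_div_two_sub]
    exact sin_le_sin_of_le_of_le_pi_div_two (by linarith) (by linarith) (by linarith)
  have hjordan : 2 * (u + 1 / 2) ≤ π * sin (u + 1 / 2) := by
    have := mul_le_sin (x := u + 1 / 2) (by linarith) (by linarith)
    rwa [div_mul_eq_mul_div, div_le_iff₀' pi_pos] at this
  have hu_le_cos : u ≤ cos h := by nlinarith [pi_lt_d2, pi_gt_three]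
  linarith [mul_le_mul_of_nonneg_left hsin hcos]

end Trigonometry

section PlaneGeometry

theorem sq_norm_add_two_mul_ofReal (z : ℂ) (x : ℝ) :
    ‖z + 2 * x‖ ^ 2 = ‖z‖ ^ 2 + 4 * x * z.re + 4 * x ^ 2 := by
  simp only [Complex.sq_norm, Complex.normSq_apply, Complex.add_re, Complex.add_im, Complex.mul_re,
    Complex.mul_im, Complex.re_ofNat, Complex.im_ofNat, Complex.ofReal_re, Complex.ofReal_im]
  ring

theorem sq_norm_add_two_mul_ofReal_mul_I (z : ℂ) (x : ℝ) :
    ‖z + 2 * x * I‖ ^ 2 = ‖z‖ ^ 2 + 4 * x * z.im + 4 * x ^ 2 := by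
  simp only [Complex.sq_norm, Complex.normSq_apply, Complex.add_re, Complex.add_im, Complex.mul_re,
    Complex.mul_im, Complex.re_ofNat, Complex.im_ofNat, Complex.ofReal_re, Complex.ofReal_im,
    Complex.I_re, Complex.I_im]
  ring

theorem sq_norm_sub_two_mul_ofReal (z : ℂ) (x : ℝ) :
    ‖z - 2 * x‖ ^ 2 = ‖z‖ ^ 2 - 4 * x * z.re + 4 * x ^ 2 := by
  simpa [sub_eq_add_neg] using sq_norm_add_two_mul_ofReal z (-x)

theorem sq_norm_sub_two_mul_ofReal_mul_I (z : ℂ) (x : ℝ) :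
    ‖z - 2 * x * I‖ ^ 2 = ‖z‖ ^ 2 - 4 * x * z.im + 4 * x ^ 2 := by
  simpa [sub_eq_add_neg] using sq_norm_add_two_mul_ofReal_mul_I z (-x)

theorem norm_mul_cos_arg_sub (z : ℂ) (φ : ℝ) :
    ‖z‖ * cos (arg z - φ) = z.re * cos φ + z.im * sin φ := by
  rw [cos_sub, ← Complex.norm_mul_cos_arg z, ← Complex.norm_mul_sin_arg z]
  ring

theorem norm_mul_sin_arg_sub (z : ℂ) (φ : ℝ) :
    ‖z‖ * sin (arg z - φ) = z.im * cos φ - z.re * sin φ := by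
  rw [sin_sub, ← Complex.norm_mul_cos_arg z, ← Complex.norm_mul_sin_arg z]
  ring

theorem re_mul_sin_le_im_mul_cos_of_le_arg {z : ℂ} {φ : ℝ} (hφ : 0 ≤ φ) (hz : φ ≤ arg z) :
    z.re * sin φ ≤ z.im * cos φ := by
  have hsin : 0 ≤ sin (arg z - φ) :=
    sin_nonneg_of_nonneg_of_le_pi (by linarith) (by linarith [Complex.arg_le_pi z])
  linarith [norm_mul_sin_arg_sub z φ, mul_nonneg (norm_nonneg z) hsin]

theorem im_mul_cos_le_re_mul_sin_of_arg_le {z : ℂ} {φ : ℝ} (hφ : φ ≤ π) (him : 0 ≤ z.im)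
    (hz : arg z ≤ φ) : z.im * cos φ ≤ z.re * sin φ := by
  have hsin : sin (arg z - φ) ≤ 0 :=
    sin_nonpos_of_nonpos_of_neg_pi_le (by linarith) (by linarith [Complex.arg_nonneg_iff.2 him])
  linarith [norm_mul_sin_arg_sub z φ, mul_nonpos_of_nonneg_of_nonpos (norm_nonneg z) hsin]

theorem re_mul_cos_add_im_mul_sin_le_norm (z : ℂ) (φ : ℝ) :
    z.re * cos φ + z.im * sin φ ≤ ‖z‖ := by
  rw [← norm_mul_cos_arg_sub]
  exact mul_le_of_le_one_right (norm_nonneg z) (cos_le_one _)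

theorem norm_le_of_norm_sub_mul_dir_le {w : ℂ} {r φ : ℝ} (hw : w ≠ 0) (h : ‖w - r * dir φ‖ ≤ r) :
    ‖w‖ ≤ 2 * r * cos (arg w - φ) := by
  have hsq : ‖w - r * dir φ‖ ^ 2 = ‖w‖ ^ 2 - 2 * r * (‖w‖ * cos (arg w - φ)) + r ^ 2 := by
    rw [norm_mul_cos_arg_sub]
    simp only [Complex.sq_norm, Complex.normSq_apply, Complex.sub_re, Complex.sub_im,
      Complex.re_ofReal_mul, Complex.im_ofReal_mul, dir.re_coe, dir.im_coe]
    linear_combination r ^ 2 * sin_sq_add_cos_sq φ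
  have : ‖w - r * dir φ‖ ^ 2 ≤ r ^ 2 := pow_le_pow_left₀ (norm_nonneg _) h 2
  exact le_of_mul_le_mul_left (by linarith) (norm_pos_iff.2 hw)

theorem exists_eq_add_mul_I_mul_dir {w : ℂ} {r : ℝ} (hr : 0 ≤ r) (hw : r ≤ ‖w‖) :
    ∃ s κ : ℝ, 0 ≤ s ∧ κ ∈ Set.Icc 0 (π / 2) ∧ w = (s + r * I) * dir ↑(arg w - κ) ∧
      w = (s - r * I) * dir ↑(arg w + κ) := by
  rcases hr.eq_or_lt with rfl | hr
  · exact ⟨‖w‖, 0, norm_nonneg w, ⟨le_rfl, by positivity⟩, by simp [dir.norm_mul_arg]⟩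
  have hw0 : 0 < ‖w‖ := hr.trans_le hw
  set κ := arcsin (r / ‖w‖) with hκ
  have hsin : ‖w‖ * sin κ = r := by
    rw [hκ, sin_arcsin (by have := div_pos hr hw0; linarith) (by rwa [div_le_one hw0])]
    field_simp
  have hpolar : ‖w‖ * dir κ = ↑(‖w‖ * cos κ) + r * I := by
    rw [← hsin]
    apply Complex.ext <;> simp [-Complex.ofReal_cos, -Complex.ofReal_sin]
  have hpolar_neg : ‖w‖ * dir ↑(-κ) = ↑(‖w‖ * cos κ) - r * I := by
    rw [← hsin]
    apply Complex.ext <;> simp [-Complex.ofReal_cos, -Complex.ofReal_sin, -Real.Angle.coe_neg]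
  refine ⟨‖w‖ * cos κ, κ, mul_nonneg hw0.le (cos_arcsin_nonneg _),
    ⟨arcsin_nonneg.2 (by positivity), arcsin_le_pi_div_two _⟩, ?_, ?_⟩
  · rw [← hpolar, mul_assoc, ← dir.add_eq_mul, ← Real.Angle.coe_add, add_sub_cancel,
      dir.norm_mul_arg]
  · rw [← hpolar_neg, mul_assoc, ← dir.add_eq_mul, ← Real.Angle.coe_add, neg_add_eq_sub,
      add_sub_cancel_right, dir.norm_mul_arg]

end PlaneGeometry

section TangentSegment

variable {h S θ : ℝ} {z : ℂ}

theorem re_eq_and_im_eq_of_eq_sub (hz : z - 2 * cos h * I = (S - 2 * I) * dir θ) :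
    z.re = S * cos θ + 2 * sin θ ∧ z.im = S * sin θ - 2 * cos θ + 2 * cos h := by
  rw [sub_eq_iff_eq_add] at hz
  constructor <;> simp [hz, -Complex.ofReal_cos, sub_eq_add_neg]

theorem re_eq_and_im_eq_of_eq_add (hz : z + 2 * cos h * I = (S + 2 * I) * dir θ) :
    z.re = S * cos θ - 2 * sin θ ∧ z.im = S * sin θ + 2 * cos θ - 2 * cos h := by
  rw [← eq_sub_iff_add_eq] at hz
  constructor <;> simp [hz, -Complex.ofReal_cos]

theorem add_two_mul_cos_mul_sin_le_norm (hz : z - 2 * cos h * I = (S - 2 * I) * dir θ) :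
    S + 2 * cos h * sin θ ≤ ‖z‖ := by
  refine le_of_eq_of_le ?_ (re_mul_cos_add_im_mul_sin_le_norm z θ)
  obtain ⟨hx, hy⟩ := re_eq_and_im_eq_of_eq_sub hz
  linear_combination -cos θ * hx - sin θ * hy - S * sin_sq_add_cos_sq θ

theorem sub_two_mul_cos_mul_sin_le_norm (hz : z + 2 * cos h * I = (S + 2 * I) * dir θ) :
    S - 2 * cos h * sin θ ≤ ‖z‖ := by
  refine le_of_eq_of_le ?_ (re_mul_cos_add_im_mul_sin_le_norm z θ)
  obtain ⟨hx, hy⟩ := re_eq_and_im_eq_of_eq_add hz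
  linear_combination -cos θ * hx - sin θ * hy - S * sin_sq_add_cos_sq θ

theorem le_of_le_arg_of_eq_sub (hh : 0 < h) (hh' : h ≤ π / 2) (hS : 0 ≤ S)
    (hθ : -(π / 2) ≤ θ) (hz : z - 2 * cos h * I = (S - 2 * I) * dir θ) (hre : 0 ≤ z.re)
    (him : 0 ≤ z.im) (harg : h ≤ arg (z - 2 * sin h)) : h ≤ θ := by
  obtain ⟨hx, hy⟩ := re_eq_and_im_eq_of_eq_sub hz
  by_contra! hlt
  rcases le_or_gt θ 0 with hθ0 | hθ0
  · have hcos_lt : cos h < 1 := by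
      simpa using cos_lt_cos_of_nonneg_of_le_pi_div_two le_rfl hh' hh
    have hcosθ : 0 ≤ cos θ := cos_nonneg_of_neg_pi_div_two_le_of_le hθ (by linarith)
    have hsinθ : sin θ ≤ 0 := sin_nonpos_of_nonpos_of_neg_pi_le hθ0 (by linarith)
    have hside : z.im * cos θ - z.re * sin θ = 2 * (cos h * cos θ - 1) := by
      linear_combination cos θ * hy - sin θ * hx - 2 * sin_sq_add_cos_sq θ
    nlinarith [mul_nonneg him hcosθ, mul_nonneg hre (neg_nonneg.2 hsinθ), cos_le_one θ]
  · have hside : (z.re - 2 * sin h) * sin h ≤ z.im * cos h := by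
      simpa [-Complex.ofReal_sin] using re_mul_sin_le_im_mul_cos_of_le_arg hh.le harg
    have hsub : S * sin (h - θ) ≤ 2 * (1 - cos (h - θ)) := by
      rw [sin_sub, cos_sub]
      linear_combination hside + cos h * hy - sin h * hx + 2 * sin_sq_add_cos_sq h
    have hlow := mul_sin_lt_of_mul_sin_sub_le hθ0 hlt (by linarith) hsub
    have hsin_le : sin θ ≤ sin h := sin_le_sin_of_le_of_le_pi_div_two hθ hh' hlt.le
    linarith [mul_le_mul_of_nonneg_left hsin_le hS]

theorem le_of_arg_le_of_eq_add (hh : 0 < h) (hθ : θ ≤ π)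
    (hz : z + 2 * cos h * I = (S + 2 * I) * dir θ) (him : 0 ≤ z.im)
    (harg : arg (z + 2 * sin h) ≤ h) : θ ≤ h := by
  obtain ⟨hx, hy⟩ := re_eq_and_im_eq_of_eq_add hz
  by_contra! hlt
  have hside : z.im * cos h ≤ (z.re + 2 * sin h) * sin h := by
    simpa [-Complex.ofReal_sin] using
      im_mul_cos_le_re_mul_sin_of_arg_le (hlt.le.trans hθ) (by simpa using him) harg
  have hsub : S * sin (θ - h) ≤ 2 * (1 - cos (θ - h)) := by
    rw [sin_sub, cos_sub]
    linear_combination hside - cos h * hy + sin h * hx + 2 * sin_sq_add_cos_sq h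
  linarith [mul_sin_lt_of_mul_sin_sub_le hh hlt hθ hsub]

end TangentSegment

namespace BCReachable

section SymmetricHeadings

variable {h S θ : ℝ} {z : ℂ}

/-
For headings `-h` and `h` and displacement `z`, the displacement from the centre of a turning circle
at the start to the centre of one at the end is `z - 2 * sin h` (left to left), `z + 2 * sin h`
(right to right), `z - 2 * cos h * I` (left to right) and `z + 2 * cos h * I` (right to left). The
prefix of a lemma name is the word it uses, `ccc` standing for `rlr` or `lrl`.
-/

theorem lsl_of_abs_arg_le (hz : |arg (z - 2 * sin h)| ≤ h) :
    BCReachable (‖z - 2 * sin h‖ + 2 * h) z (-h) h := by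
  have hpath := lsl (norm_nonneg (z - 2 * sin h)) (abs_le.1 hz).1 (abs_le.1 hz).2
  rw [dir.norm_mul_arg, dir.I_mul_neg_sub_self, sub_add_cancel, Real.Angle.coe_neg] at hpath
  exact hpath.mono (by linarith)

theorem rsr_of_le_arg (hz : h ≤ arg (z + 2 * sin h)) :
    BCReachable (‖z + 2 * sin h‖ + (2 * π - 2 * h)) z (-h) h := by
  have hturn : arg (z + 2 * sin h) ≤ -h + 2 * π := by
    linarith [Complex.arg_le_pi (z + 2 * sin h)]
  have hpath := rsr (norm_nonneg (z + 2 * sin h)) hturn hz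
  rw [Real.Angle.coe_add, Real.Angle.coe_two_pi, add_zero, dir.norm_mul_arg] at hpath
  rw [← Real.Angle.coe_neg]
  convert hpath using 1
  · ring
  · linear_combination dir.I_mul_neg_sub_self h

theorem rlr_of_norm_le (hh : h ≤ π / 2) (hw : z + 2 * sin h ≠ 0)
    (hz : ‖z - 2 * cos h * I‖ ≤ 2) (him : 0 ≤ z.im) :
    BCReachable (2 * π - 2 * h + 4 * arccos (‖z + 2 * sin h‖ / 4)) z (-h) h := by
  set w := z + 2 * sin h with hw_def
  have harg_nonneg : 0 ≤ arg w := Complex.arg_nonneg_iff.2 (by simpa [hw_def] using him)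
  have harg_le := Complex.arg_le_pi w
  have hnorm : ‖w‖ ≤ 2 * 2 * cos (arg w - (π / 2 - h)) := by
    refine norm_le_of_norm_sub_mul_dir_le hw (le_of_eq_of_le (congrArg norm ?_) hz)
    apply Complex.ext <;> simp [hw_def, -Real.Angle.coe_sub, -Complex.ofReal_sin,
      -Complex.ofReal_cos, cos_pi_div_two_sub, sin_pi_div_two_sub]
  have hturn : arg w - (π / 2 - h) ≤ arccos (‖w‖ / 4) :=
    le_arccos_of_le_cos (by linarith) (by linarith)
  have hnorm_le : ‖w‖ ≤ 4 := by linarith [cos_le_one (arg w - (π / 2 - h))]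
  have hpath := rlr (a := -h) (b := h) hnorm_le (by linarith)
    (by linarith [arccos_nonneg (‖w‖ / 4)])
  rw [← Real.Angle.coe_neg]
  convert hpath using 1
  · ring
  · linear_combination dir.I_mul_neg_sub_self h - hw_def

theorem lrl_of_norm_le (hh : 0 ≤ h) (hw : z - 2 * sin h ≠ 0)
    (hz : ‖z + 2 * cos h * I‖ ≤ 2) (him : 0 ≤ z.im) :
    BCReachable (2 * h + 4 * arccos (‖z - 2 * sin h‖ / 4)) z (-h) h := by
  set w := z - 2 * sin h with hw_def
  have harg_nonneg : 0 ≤ arg w := Complex.arg_nonneg_iff.2 (by simpa [hw_def] using him)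
  have harg_le := Complex.arg_le_pi w
  have hnorm : ‖w‖ ≤ 2 * 2 * cos (arg w - (-(π / 2) - h)) := by
    refine norm_le_of_norm_sub_mul_dir_le hw (le_of_eq_of_le (congrArg norm ?_) hz)
    apply Complex.ext <;> simp [hw_def, -Real.Angle.coe_sub, -Complex.ofReal_sin,
      -Complex.ofReal_cos, sin_sub, cos_sub]
  have hpos : 0 < cos (arg w - (-(π / 2) - h)) := by linarith [norm_pos_iff.2 hw]
  have harg_ge : π / 2 ≤ arg w + h := by
    by_contra! hlt
    exact hpos.not_ge (cos_nonpos_of_pi_div_two_le_of_le (by linarith) (by linarith))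
  have hturn : 3 * π / 2 - h - arg w ≤ arccos (‖w‖ / 4) := by
    refine le_arccos_of_le_cos (by linarith) ?_
    rw [← cos_neg, ← cos_add_two_pi,
      show -(3 * π / 2 - h - arg w) + 2 * π = arg w - (-(π / 2) - h) by ring]
    linarith
  have hnorm_le : ‖w‖ ≤ 4 := by linarith [cos_le_one (arg w - (-(π / 2) - h))]
  have hpath := lrl (a := -h + 2 * π) (b := h) hnorm_le (by linarith) (by linarith)
  rw [Real.Angle.coe_add, Real.Angle.coe_two_pi, add_zero] at hpath
  rw [← Real.Angle.coe_neg]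
  convert hpath using 1
  · ring
  · linear_combination -dir.I_mul_neg_sub_self h - hw_def

theorem ccc_of_norm_le_pi_sub (hh : 0 ≤ h) (hnorm : ‖z‖ ≤ π - 2 * h)
    (hnorm_lt : ‖z‖ < 2 * sin h) (hz : ‖z + 2 * cos h * I‖ ≤ 2) (him : 0 ≤ z.im) :
    BCReachable (‖z‖ + 7 * π / 3) z (-h) h := by
  have hcentres : 2 * cos (π / 2 - h) - ‖z‖ ≤ ‖z - 2 * sin h‖ := by
    rw [cos_pi_div_two_sub, norm_sub_rev]
    calc 2 * sin h - ‖z‖ ≤ ‖(2 * sin h : ℂ)‖ - ‖z‖ := by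
          gcongr
          exact_mod_cast le_abs_self (2 * sin h)
      _ ≤ ‖2 * sin h - z‖ := norm_sub_norm_le _ _
  have hsub_ne : z - 2 * sin h ≠ 0 := by
    rw [cos_pi_div_two_sub] at hcentres
    exact norm_pos_iff.1 (by linarith)
  have harccos := arccos_le_pi_div_three_add (norm_nonneg z)
    (show ‖z‖ ≤ 2 * (π / 2 - h) by linarith) (by linarith) hcentres
  exact (lrl_of_norm_le hh hsub_ne hz him).mono (by linarith)

theorem ccc_of_pi_sub_le_norm (hh : 0 ≤ h) (hh' : h ≤ π / 2)
    (hnorm : π - 2 * h ≤ ‖z‖) (hz : ‖z + 2 * cos h * I‖ ≤ 2) (him : 0 ≤ z.im) :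
    BCReachable (‖z‖ + 7 * π / 3) z (-h) h := by
  have hcos : 0 ≤ cos h := cos_nonneg_of_neg_pi_div_two_le_of_le (by linarith) hh'
  have hsin : 0 ≤ sin h := sin_nonneg_of_nonneg_of_le_pi hh (by linarith)
  have hcircle := sin_sq_add_cos_sq h
  have hcos_le : 2 * cos h ≤ ‖z‖ := by
    rw [← sin_pi_div_two_sub]
    linarith [sin_le (show 0 ≤ π / 2 - h by linarith)]
  have hsq : (2 * cos h) ^ 2 ≤ ‖z‖ ^ 2 := by gcongr
  have harccos {w : ℂ} (hw : 2 ≤ ‖w‖) : arccos (‖w‖ / 4) ≤ π / 3 :=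
    arccos_le_of_cos_le (by positivity) (by rw [cos_pi_div_three]; linarith)
  rcases le_total 0 z.re with hre | hre
  · have hcentres : 2 ≤ ‖z + 2 * sin h‖ := by
      refine le_of_sq_le_sq ?_ (norm_nonneg _)
      rw [sq_norm_add_two_mul_ofReal]
      nlinarith [mul_nonneg hsin hre]
    have hsub : ‖z - 2 * cos h * I‖ ≤ 2 := by
      refine le_trans (le_of_sq_le_sq ?_ (norm_nonneg _)) hz
      rw [sq_norm_add_two_mul_ofReal_mul_I, sq_norm_sub_two_mul_ofReal_mul_I]
      linarith [mul_nonneg hcos him]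
    exact (rlr_of_norm_le hh' (norm_pos_iff.1 (by linarith)) hsub him).mono
      (by linarith [harccos hcentres])
  · have hcentres : 2 ≤ ‖z - 2 * sin h‖ := by
      refine le_of_sq_le_sq ?_ (norm_nonneg _)
      rw [sq_norm_sub_two_mul_ofReal]
      nlinarith [mul_nonneg hsin (neg_nonneg.2 hre)]
    exact (lrl_of_norm_le hh (norm_pos_iff.1 (by linarith)) hz him).mono
      (by linarith [harccos hcentres])

theorem ccc_of_norm_lt (hh : 0 ≤ h) (hh' : h ≤ π / 2)
    (hz : ‖z + 2 * cos h * I‖ < 2) (him : 0 ≤ z.im) :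
    BCReachable (‖z‖ + 7 * π / 3) z (-h) h := by
  rcases le_total ‖z‖ (π - 2 * h) with hnear | hfar
  · have hcos : 0 ≤ cos h := cos_nonneg_of_neg_pi_div_two_le_of_le (by linarith) hh'
    have hsin : 0 ≤ sin h := sin_nonneg_of_nonneg_of_le_pi hh (by linarith)
    have hnorm_lt : ‖z‖ < 2 * sin h := by
      refine lt_of_pow_lt_pow_left₀ 2 (by positivity) ?_
      nlinarith [norm_nonneg (z + 2 * cos h * I), sq_norm_add_two_mul_ofReal_mul_I z (cos h),
        mul_nonneg hcos him, sin_sq_add_cos_sq h]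
    exact ccc_of_norm_le_pi_sub hh hnear hnorm_lt hz.le him
  · exact ccc_of_pi_sub_le_norm hh hh' hfar hz.le him

theorem lsr_of_eq_sub (hS : 0 ≤ S) (hθ : |h| ≤ θ)
    (hz : z - 2 * cos h * I = (S - 2 * I) * dir θ) : BCReachable (S + 2 * θ) z (-h) h := by
  obtain ⟨hneg, hpos⟩ := abs_le'.1 hθ |>.symm
  have hpath := lsr hS hneg hpos
  rw [← Real.Angle.coe_neg]
  convert hpath using 1
  · ring
  · linear_combination hz - I * dir.neg_add_self h

theorem rsl_of_eq_add (hS : 0 ≤ S) (hθ : θ ≤ -|h|)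
    (hz : z + 2 * cos h * I = (S + 2 * I) * dir θ) : BCReachable (S - 2 * θ) z (-h) h := by
  obtain ⟨hpos, hneg⟩ := abs_le'.1 (le_neg.1 hθ)
  have hpath := rsl hS (le_neg.1 hpos) (neg_le_neg_iff.1 hneg)
  rw [← Real.Angle.coe_neg]
  convert hpath using 1
  · ring
  · linear_combination hz + I * dir.neg_add_self h

theorem rsl_of_eq_add_of_le (hS : 0 ≤ S) (hθ : θ ≤ h) (hθ' : θ ≤ 2 * π - h)
    (hz : z + 2 * cos h * I = (S + 2 * I) * dir θ) :
    BCReachable (S + (2 * π - 2 * θ)) z (-h) h := by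
  have hpath := rsl (a := -h + 2 * π) hS (by linarith) hθ
  rw [Real.Angle.coe_add, Real.Angle.coe_two_pi, add_zero] at hpath
  rw [← Real.Angle.coe_neg]
  convert hpath using 1
  · ring
  · linear_combination hz + I * dir.neg_add_self h

theorem lsr_of_two_le_norm (hh : 0 < h) (hh' : h ≤ π / 2) (hre : 0 ≤ z.re)
    (him : 0 ≤ z.im) (hz : 2 ≤ ‖z - 2 * cos h * I‖) (harg : h ≤ arg (z - 2 * sin h)) :
    BCReachable (‖z‖ + 7 * π / 3) z (-h) h := by
  obtain ⟨S, κ, hS, hκ, -, hS_eq⟩ := exists_eq_add_mul_I_mul_dir zero_le_two hz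
  have harg_mem := abs_le.1 (Complex.abs_arg_le_pi_div_two_iff.2
    (show 0 ≤ (z - 2 * cos h * I).re by simpa using hre))
  obtain ⟨θ, hθ⟩ : ∃ θ, θ = arg (z - 2 * cos h * I) + κ := ⟨_, rfl⟩
  rw [← hθ, Complex.ofReal_ofNat] at hS_eq
  have hle : h ≤ θ :=
    le_of_le_arg_of_eq_sub hh hh' hS (by linarith [hκ.1]) hS_eq hre him harg
  have hcos : 0 ≤ cos h := cos_nonneg_of_neg_pi_div_two_le_of_le (by linarith) hh'
  have hsin : 0 ≤ sin θ := sin_nonneg_of_nonneg_of_le_pi (by linarith) (by linarith [hκ.2])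
  exact (lsr_of_eq_sub hS (by rwa [abs_of_pos hh]) hS_eq).mono
    (by linarith [hκ.2, mul_nonneg hcos hsin, add_two_mul_cos_mul_sin_le_norm hS_eq])

theorem rsl_or_rlr_of_eq_add {τ : ℝ} (hS : 0 ≤ S) (hτ : 0 < τ) (hτh : τ ≤ h)
    (hh : h ≤ π / 2) (hz : z + 2 * cos h * I = (S + 2 * I) * dir ↑(-τ)) (him : 0 ≤ z.im)
    (hsub : 0 ≤ z.re → ‖z - 2 * cos h * I‖ ≤ 2) : BCReachable (‖z‖ + 7 * π / 3) z (-h) h := by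
  rcases two_mul_le_or_five_pi_div_three_le hτ.le hτh hh with hsmall | hlarge
  · have hS_le := sub_two_mul_cos_mul_sin_le_norm hz
    rw [sin_neg] at hS_le
    exact (rsl_of_eq_add_of_le hS (by linarith) (by linarith) hz).mono (by linarith)
  have hsin : 0 < sin τ := sin_pos_of_pos_of_lt_pi hτ (by linarith)
  have hsin_le : sin τ ≤ sin h := sin_le_sin_of_le_of_le_pi_div_two (by linarith) hh hτh
  have hre : 2 * sin τ ≤ z.re := by
    have hcos : 0 ≤ cos τ := cos_nonneg_of_neg_pi_div_two_le_of_le (by linarith) (by linarith)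
    have hx := (re_eq_and_im_eq_of_eq_add hz).1
    rw [cos_neg, sin_neg] at hx
    linarith [mul_nonneg hS hcos]
  have hcentres : 4 * sin τ ≤ ‖z + 2 * sin h‖ := by
    refine le_trans ?_ (Complex.re_le_norm _)
    rw [Complex.add_re, ← Complex.ofReal_ofNat, ← Complex.ofReal_mul, Complex.ofReal_re]
    linarith
  have harccos : arccos (‖z + 2 * sin h‖ / 4) ≤ π / 2 - τ := by
    refine arccos_le_of_cos_le (by linarith) ?_
    rw [cos_pi_div_two_sub]
    linarith
  exact (rlr_of_norm_le hh (norm_pos_iff.1 (by linarith)) (hsub (by linarith)) him).mono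
    (by linarith [Complex.re_le_norm z])

theorem rsl_of_two_le_norm (hh : 0 < h) (hh' : h ≤ π / 2) (him : 0 ≤ z.im)
    (hz : 2 ≤ ‖z + 2 * cos h * I‖) (harg : arg (z + 2 * sin h) ≤ h)
    (hsub : 0 ≤ z.re → ‖z - 2 * cos h * I‖ ≤ 2) : BCReachable (‖z‖ + 7 * π / 3) z (-h) h := by
  obtain ⟨S, κ, hS, hκ, hS_eq, -⟩ := exists_eq_add_mul_I_mul_dir zero_le_two hz
  obtain ⟨θ, hθ⟩ : ∃ θ, θ = arg (z + 2 * cos h * I) - κ := ⟨_, rfl⟩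
  rw [← hθ, Complex.ofReal_ofNat] at hS_eq
  have hcos : 0 ≤ cos h := cos_nonneg_of_neg_pi_div_two_le_of_le (by linarith) hh'
  have harg_nonneg : 0 ≤ arg (z + 2 * cos h * I) := by
    refine Complex.arg_nonneg_iff.2 ?_
    suffices 0 ≤ z.im + 2 * cos h by simpa [-Complex.ofReal_cos]
    positivity
  have hθ_ge : -(π / 2) ≤ θ := by linarith [hκ.2]
  have hθ_le : θ ≤ π := by linarith [hκ.1, Complex.arg_le_pi (z + 2 * cos h * I)]
  have hθh : θ ≤ h := le_of_arg_le_of_eq_add hh hθ_le hS_eq him harg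
  have hS_le := sub_two_mul_cos_mul_sin_le_norm hS_eq
  rcases le_or_gt 0 θ with hθ0 | hθ0
  · have hsin : cos h * sin θ ≤ θ :=
      (mul_le_of_le_one_left (sin_nonneg_of_nonneg_of_le_pi hθ0 hθ_le) (cos_le_one h)).trans
        (sin_le hθ0)
    exact (rsl_of_eq_add_of_le hS hθh (by linarith) hS_eq).mono (by linarith)
  rcases le_or_gt θ (-h) with hθ_neg | hθ_neg
  · have hsin : sin θ ≤ 0 := sin_nonpos_of_nonpos_of_neg_pi_le hθ0.le (by linarith)
    exact (rsl_of_eq_add hS (by rwa [abs_of_pos hh]) hS_eq).mono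
      (by linarith [mul_nonpos_of_nonneg_of_nonpos hcos hsin])
  · exact rsl_or_rlr_of_eq_add hS (neg_pos.2 hθ0) (by linarith) hh'
      (by rwa [neg_neg]) him hsub

theorem of_nonneg_im (hh : 0 ≤ h) (hh' : h ≤ π / 2) (him : 0 ≤ z.im) :
    BCReachable (‖z‖ + 7 * π / 3) z (-h) h := by
  have hsin : ‖(2 * sin h : ℂ)‖ ≤ 2 * h := by
    rw [norm_mul, Complex.norm_ofNat, Complex.norm_real]
    exact mul_le_mul_of_nonneg_left (abs_sin_le_abs.trans_eq (abs_of_nonneg hh)) zero_le_two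
  rcases le_or_gt h (arg (z + 2 * sin h)) with hrsr | hrsr
  · exact (rsr_of_le_arg hrsr).mono (by linarith [norm_add_le z (2 * sin h), pi_pos])
  have hpos : 0 < h :=
    (Complex.arg_nonneg_iff.2 (by simpa using him)).trans_lt hrsr
  rcases lt_or_ge ‖z + 2 * cos h * I‖ 2 with hccc | hrsl
  · exact ccc_of_norm_lt hh hh' hccc him
  by_cases hlsr : 0 ≤ z.re ∧ 2 ≤ ‖z - 2 * cos h * I‖
  · rcases le_total h (arg (z - 2 * sin h)) with harg | harg
    · exact lsr_of_two_le_norm hpos hh' hlsr.1 him hlsr.2 harg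
    · have harg_nonneg : 0 ≤ arg (z - 2 * sin h) :=
        Complex.arg_nonneg_iff.2 (by simpa using him)
      exact (lsl_of_abs_arg_le (by rwa [abs_of_nonneg harg_nonneg])).mono
        (by linarith [norm_sub_le z (2 * sin h), pi_pos])
  · exact rsl_of_two_le_norm hpos hh' him hrsl hrsr.le
      fun hre ↦ le_of_not_ge fun hge ↦ hlsr ⟨hre, hge⟩

theorem of_abs_le_pi_div_two (hh : |h| ≤ π / 2) (z : ℂ) :
    BCReachable (‖z‖ + 7 * π / 3) z (-h) h := by
  have of_nonneg {h : ℝ} (hh : 0 ≤ h) (hh' : h ≤ π / 2) :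
      BCReachable (‖z‖ + 7 * π / 3) z (-h) h := by
    rcases le_total 0 z.im with him | him
    · exact of_nonneg_im hh hh' him
    · have hconj := of_nonneg_im (z := conj z) hh hh' (by simpa using him)
      simpa using hconj.reflect.symm
  rcases le_total 0 h with hh0 | hh0
  · exact of_nonneg hh0 (le_of_abs_le hh)
  · simpa using (of_nonneg (neg_nonneg.2 hh0) (neg_le_of_neg_le (neg_le_of_abs_le hh))).symm

end SymmetricHeadings

theorem norm_add_seven_pi_div_three (z : ℂ) (a b : Real.Angle) :
    BCReachable (‖z‖ + 7 * π / 3) z a b := by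
  obtain ⟨h, hh, hb⟩ : ∃ h : ℝ, |h| ≤ π / 2 ∧ b = a + (h + h) := by
    refine ⟨(b - a).toReal / 2, ?_, ?_⟩
    · rw [abs_div, abs_two]
      linarith [(b - a).abs_toReal_le_pi]
    · rw [← Real.Angle.coe_add, add_halves, Real.Angle.coe_toReal, add_sub_cancel]
  have hpath := (of_abs_le_pi_div_two hh (z * dir (-(a + h)))).rotate (a + h)
  rw [mul_assoc, mul_comm (dir _), dir.mul_neg_eq_one, norm_mul, dir.norm_eq_one, mul_one, mul_one]
    at hpath
  convert hpath using 1
  · abel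
  · rw [hb]
    abel

end BCReachable

theorem bcPath_length_le_seven_pi_third_general (x₀ y₀ α x₁ y₁ β : ℝ) :
    ∃ T γ, IsBCPath T x₀ y₀ α x₁ y₁ β γ ∧
      T ≤ √((x₁ - x₀) ^ 2 + (y₁ - y₀) ^ 2) + 7 * π / 3 := by
  obtain ⟨T, hT, γ, hγ⟩ :=
    (BCReachable.norm_add_seven_pi_div_three ⟨x₁ - x₀, y₁ - y₀⟩ α β).exists_isBCPath ⟨x₀, y₀⟩
  refine ⟨T, γ, by simpa using hγ, ?_⟩
  rwa [Complex.norm_eq_sqrt_sq_add_sq] at hT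

/-- For every `d ≥ 0` and all angles `α, β`, there is a
bounded-curvature path from `(0, 0, α)` to `(d, 0, β)` of length at most
`d + 7π/3`. -/
theorem bcPath_length_le_seven_pi_third (d : ℝ) (hd : 0 ≤ d) (α β : ℝ) :
    ∃ (T : ℝ) (γ : ℝ → EuclideanSpace ℝ (Fin 2)),
      IsBCPath T 0 0 α d 0 β γ ∧ T ≤ d + 7 * π / 3 := by
  simpa [sqrt_sq hd] using bcPath_length_le_seven_pi_third_general 0 0 α d 0 β
end
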